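/- Suppose that for every triple (H,h,χ) satisfying condition (*), the order of hZ(H) in H/Z(H) divides |H : Z(H)|/χ(1) (equivalently, o(hZ(H))·χ(1) divides |H : Z(H)|). Then Wilde's conjecture holds: for every finite group G, every irreducible complex character χ of G, and every g ∈ G with χ(g) ≠ 0, the order o(g) of g divides |G|/χ(1) (equivalently, o(g)·χ(1) divides |G|). -/

import Mathlib

/-- A group `L` is quasi-simple if it is perfect and `L/Z(L)` is simple. -/
def IsQuasisimple (L : Type*) [Group L] : Prop :=
  commutator L = ⊤ ∧ IsSimpleGroup (L ⧸ Subgroup.center L)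

/-- A triple `(H, h, χ)` (with `χ` afforded by the representation `V`) satisfies
condition `(*)`: `H` is a finite group, `h ∈ H`, the derived subgroup `L = [H,H]` is
quasi-simple, `Z(L) = Z(H)` is cyclic, `H = ⟨L, h⟩`, and `χ ∈ Irr(H)` is faithful. -/
def SatisfiesStar (H : Type) [Group H] [Finite H] (h : H) (V : FDRep ℂ H) : Prop :=
  CategoryTheory.Simple V ∧ Function.Injective V.ρ ∧
    IsQuasisimple ↥(commutator H) ∧
    Subgroup.map (commutator H).subtype (Subgroup.center ↥(commutator H)) =
      Subgroup.center H ∧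
    IsCyclic ↥(Subgroup.center H) ∧
    commutator H ⊔ Subgroup.zpowers h = ⊤

/-!
The divisibility `o(g) χ(1) ∣ |G|` is proved for irreducible *projective* representations, which are
stable under the reductions of Clifford theory, by induction on `|G| + dim V`. Elements acting by
scalars are factored out. For a normal subgroup `N ≠ 1`, either `V` is induced from the stabilizer
of a proper block, or `V = U ⊗ W` with `N` irreducible on `U` and trivial on `W`; the smaller pieces
give the divisibility unless `G = N⟨g⟩` and `N` is irreducible on `V`.

In the latter case, if `N` is abelian then `|N| = (dim V)²` and `N` has exponent dividing `dim V`.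
Otherwise a minimal normal subgroup `N` is a power of a nonabelian simple group `S`. If `S` is not
normal, `g` permutes its `t` conjugates cyclically, the character value at `g` equals, up to a
nonzero scalar, the one at `g ^ t` on a single tensor factor, and the induction hypothesis applies
to `N_G(S) / C_G(S)` and `C_G(S)`. If `S = N`, the group of operators inducing elements of `G`
contains a finite cover of `G` satisfying `(*)`, to which the assumption applies.
-/

universe u v

open Module
open scoped TensorProduct commutatorElement

/-- Equality of operators up to a nonzero scalar, that is, equality in the projective linear group
when the operators are invertible. -/
def Proportional {K V : Type*} [Field K] [AddCommGroup V] [Module K V] (A B : Module.End K V) :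
    Prop :=
  ∃ c : K, c ≠ 0 ∧ A = c • B

local infix:50 " ∝ " => Proportional

namespace Proportional

variable {K V : Type*} [Field K] [AddCommGroup V] [Module K V] {A B C D : Module.End K V}

theorem refl (A : Module.End K V) : A ∝ A := ⟨1, one_ne_zero, (one_smul K A).symm⟩

theorem symm (h : A ∝ B) : B ∝ A := by
  obtain ⟨c, hc, rfl⟩ := h
  exact ⟨c⁻¹, inv_ne_zero hc, (inv_smul_smul₀ hc B).symm⟩

theorem trans (h : A ∝ B) (h' : B ∝ C) : A ∝ C := by
  obtain ⟨c, hc, rfl⟩ := h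
  obtain ⟨d, hd, rfl⟩ := h'
  exact ⟨c * d, mul_ne_zero hc hd, smul_smul c d C⟩

theorem mul (h : A ∝ B) (h' : C ∝ D) : A * C ∝ B * D := by
  obtain ⟨c, hc, rfl⟩ := h
  obtain ⟨d, hd, rfl⟩ := h'
  exact ⟨c * d, mul_ne_zero hc hd, smul_mul_smul_comm c B d D⟩

theorem trace_ne_zero (h : A ∝ B) (hA : LinearMap.trace K V A ≠ 0) :
    LinearMap.trace K V B ≠ 0 := by
  obtain ⟨c, -, rfl⟩ := h
  rw [map_smul] at hA
  exact right_ne_zero_of_smul hA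

theorem apply_mem (h : A ∝ B) {W : Submodule K V} {w : V} (hw : B w ∈ W) : A w ∈ W := by
  obtain ⟨c, -, rfl⟩ := h
  exact W.smul_mem c hw

theorem map_eq (h : A ∝ B) (W : Submodule K V) : W.map A = W.map B := by
  obtain ⟨c, hc, rfl⟩ := h
  exact Submodule.map_smul _ _ c hc

end Proportional

/-- A projective representation of `G`, given by a lift of `G → PGL(V)` to operators on `V`. -/
structure IsProjRep {K G V : Type*} [Field K] [Group G] [AddCommGroup V] [Module K V]
    (T : G → Module.End K V) : Prop where
  isUnit : ∀ g, IsUnit (T g)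
  map_mul : ∀ g h, T (g * h) ∝ T g * T h

/-- A family of operators on a nonzero space without proper nonzero common invariant subspace. -/
structure IsIrreducibleFamily {K ι V : Type*} [Field K] [AddCommGroup V] [Module K V]
    (T : ι → Module.End K V) : Prop where
  nontrivial : Nontrivial V
  eq_bot_or_eq_top : ∀ W : Submodule K V, (∀ i, ∀ w ∈ W, T i w ∈ W) → W = ⊥ ∨ W = ⊤

namespace IsProjRep

variable {K G H V : Type*} [Field K] [Group G] [Group H] [AddCommGroup V] [Module K V]
  {T : G → Module.End K V}

theorem map_one (h : IsProjRep T) : T 1 ∝ 1 := by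
  obtain ⟨c, hc, hmul⟩ := h.map_mul 1 1
  refine .symm ⟨c, hc, (h.isUnit 1).mul_left_cancel ?_⟩
  rw [mul_one, mul_smul_comm, ← hmul, mul_one]

theorem mul_map_inv (h : IsProjRep T) (g : G) : T g * T g⁻¹ ∝ 1 := by
  have hmul := h.map_mul g g⁻¹
  rw [mul_inv_cancel] at hmul
  exact hmul.symm.trans h.map_one

theorem map_pow (h : IsProjRep T) (g : G) (n : ℕ) : T (g ^ n) ∝ T g ^ n := by
  induction n with
  | zero => simpa only [pow_zero] using h.map_one
  | succ n ih => rw [pow_succ, pow_succ]; exact (h.map_mul _ _).trans (ih.mul (.refl _))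

theorem mul_map (h : IsProjRep T) (g n : G) : T g * T n ∝ T (g * n * g⁻¹) * T g := by
  have hmul := h.map_mul (g * n * g⁻¹) g
  rw [inv_mul_cancel_right] at hmul
  exact (h.map_mul _ _).symm.trans hmul

theorem comp (h : IsProjRep T) (f : H →* G) : IsProjRep fun x => T (f x) :=
  ⟨fun x => h.isUnit _, fun x y => by simpa only [_root_.map_mul] using h.map_mul (f x) (f y)⟩

theorem subgroup (h : IsProjRep T) (H : Subgroup G) : IsProjRep fun x : H => T x :=
  h.comp H.subtype

theorem injective (h : IsProjRep T) (g : G) : Function.Injective (T g) :=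
  ((Module.End.isUnit_iff _).1 (h.isUnit g)).1

theorem submodule_map_map (h : IsProjRep T) (g g' : G) (W : Submodule K V) :
    (W.map (T g')).map (T g) = W.map (T (g * g')) := by
  rw [(h.map_mul g g').map_eq, Module.End.mul_eq_comp, Submodule.map_comp]

theorem submodule_map_one (h : IsProjRep T) (W : Submodule K V) : W.map (T 1) = W := by
  rw [h.map_one.map_eq, Module.End.one_eq_id, Submodule.map_id]

/-- The honest action on subspaces induced by a projective representation. -/
abbrev submoduleAction (h : IsProjRep T) : MulAction G (Submodule K V) where
  smul g W := W.map (T g)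
  one_smul := h.submodule_map_one
  mul_smul g g' W := (h.submodule_map_map g g' W).symm

/-- The elements mapping a subspace onto itself. -/
def stabilizer (h : IsProjRep T) (Y : Submodule K V) : Subgroup G :=
  letI := h.submoduleAction
  MulAction.stabilizer G Y

theorem mem_stabilizer (h : IsProjRep T) {Y : Submodule K V} {x : G} :
    x ∈ h.stabilizer Y ↔ Y.map (T x) = Y := Iff.rfl

theorem apply_mem_of_mem_stabilizer (h : IsProjRep T) {Y : Submodule K V} {x : G}
    (hx : x ∈ h.stabilizer Y) {y : V} (hy : y ∈ Y) : T x y ∈ Y :=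
  (h.mem_stabilizer.1 hx).le (Submodule.mem_map_of_mem hy)

theorem isProjRep_restrict [FiniteDimensional K V] (h : IsProjRep T) {Y : Submodule K V}
    (hY : ∀ g, ∀ y ∈ Y, T g y ∈ Y) : IsProjRep fun g => (T g).restrict (hY g) where
  isUnit g := by
    have hinj : Function.Injective ((T g).restrict (hY g)) := fun a b hab =>
      Subtype.ext (h.injective g (congrArg Subtype.val hab))
    exact (Module.End.isUnit_iff _).2 ⟨hinj, LinearMap.surjective_of_injective hinj⟩
  map_mul g g' := by
    obtain ⟨c, hc, hmul⟩ := h.map_mul g g'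
    exact ⟨c, hc, LinearMap.ext fun y => Subtype.ext (LinearMap.congr_fun hmul y)⟩

/-- The elements acting by scalars, i.e. the kernel of `G → PGL(V)`. -/
def scalarKernel (h : IsProjRep T) : Subgroup G where
  carrier := {k | T k ∝ 1}
  one_mem' := h.map_one
  mul_mem' {a b} ha hb := by
    have hab := (h.map_mul a b).trans (ha.mul hb)
    rwa [mul_one] at hab
  inv_mem' {a} ha := by
    have hinv := (h.mul_map_inv a).symm.trans (ha.mul (.refl (T a⁻¹)))
    rw [one_mul] at hinv
    exact hinv.symm

theorem mem_scalarKernel (h : IsProjRep T) {k : G} : k ∈ h.scalarKernel ↔ T k ∝ 1 := Iff.rfl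

instance normal_scalarKernel (h : IsProjRep T) : h.scalarKernel.Normal where
  conj_mem n hn g := by
    have hconj := (h.map_mul (g * n) g⁻¹).trans
      (((h.map_mul g n).trans ((Proportional.refl (T g)).mul hn)).mul (.refl (T g⁻¹)))
    rw [mul_one] at hconj
    exact hconj.trans (h.mul_map_inv g)

theorem scalarKernel_subgroup_eq_bot (h : IsProjRep T) (hker : h.scalarKernel = ⊥)
    (H : Subgroup G) : (h.subgroup H).scalarKernel = ⊥ :=
  (Subgroup.eq_bot_iff_forall _).2 fun x hx =>
    Subtype.ext ((Subgroup.eq_bot_iff_forall _).1 hker x hx)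

end IsProjRep

namespace IsIrreducibleFamily

variable {K ι κ V V' : Type*} [Field K] [AddCommGroup V] [Module K V] [AddCommGroup V']
  [Module K V'] {T S : ι → Module.End K V}

theorem of_forall_exists_proportional {S : κ → Module.End K V} (h : IsIrreducibleFamily T)
    (hTS : ∀ i, ∃ j, T i ∝ S j) : IsIrreducibleFamily S := by
  refine ⟨h.nontrivial, fun W hW => h.eq_bot_or_eq_top W fun i w hw => ?_⟩
  obtain ⟨j, hj⟩ := hTS i
  exact hj.apply_mem (hW j w hw)

theorem of_linearEquiv {T' : ι → Module.End K V'} (h : IsIrreducibleFamily T) (e : V ≃ₗ[K] V')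
    (he : ∀ i v, e (T i v) = T' i (e v)) : IsIrreducibleFamily T' := by
  have := h.nontrivial
  refine ⟨e.symm.toEquiv.nontrivial, fun W hW => ?_⟩
  have hcomap := h.eq_bot_or_eq_top (W.comap e.toLinearMap) fun i w hw => by
    rw [Submodule.mem_comap, LinearEquiv.coe_coe, he]
    exact hW i _ hw
  have hmap : (W.comap e.toLinearMap).map e.toLinearMap = W :=
    Submodule.map_comap_eq_of_surjective e.surjective W
  rw [← hmap]
  refine hcomap.imp (fun h0 => ?_) (fun h1 => ?_)
  · rw [h0, Submodule.map_bot]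
  · rw [h1, Submodule.map_top, LinearEquiv.range]

variable [FiniteDimensional K V]

theorem isUnit_of_intertwining (h : IsIrreducibleFamily T) {f : Module.End K V}
    (hf : ∀ i, f * T i = S i * f) (hne : f ≠ 0) : IsUnit f := by
  have hker := h.eq_bot_or_eq_top (LinearMap.ker f) fun i w hw => by
    have hfi := LinearMap.congr_fun (hf i) w
    rw [Module.End.mul_apply, Module.End.mul_apply, LinearMap.mem_ker.1 hw, _root_.map_zero] at hfi
    exact LinearMap.mem_ker.2 hfi
  rw [LinearMap.isUnit_iff_ker_eq_bot]
  exact hker.resolve_right fun htop => hne (LinearMap.ker_eq_top.1 htop)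

variable [IsAlgClosed K]

theorem exists_eq_smul_one (h : IsIrreducibleFamily T) {f : Module.End K V}
    (hf : ∀ i, f * T i = T i * f) : ∃ c : K, f = c • 1 := by
  have := h.nontrivial
  obtain ⟨c, hc⟩ := Module.End.exists_eigenvalue f
  have htop := (h.eq_bot_or_eq_top (Module.End.eigenspace f c) fun i w hw => by
    rw [Module.End.mem_eigenspace_iff] at hw ⊢
    rw [← Module.End.mul_apply, hf, Module.End.mul_apply, hw, map_smul]).resolve_left hc
  refine ⟨c, LinearMap.ext fun v => ?_⟩
  exact Module.End.mem_eigenspace_iff.1 (htop ▸ Submodule.mem_top)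

theorem exists_eq_smul_of_intertwining (h : IsIrreducibleFamily T) {f g : Module.End K V}
    (hg : IsUnit g) (hfS : ∀ i, f * T i = S i * f) (hgS : ∀ i, g * T i = S i * g) :
    ∃ c : K, f = c • g := by
  obtain ⟨u, rfl⟩ := hg
  have hinv (i : ι) : ↑u⁻¹ * S i = T i * ↑u⁻¹ := by
    rw [Units.inv_mul_eq_iff_eq_mul, ← mul_assoc, hgS, Units.mul_inv_cancel_right]
  obtain ⟨c, hc⟩ := h.exists_eq_smul_one (f := ↑u⁻¹ * f) fun i => by
    rw [mul_assoc, hfS, ← mul_assoc, hinv, mul_assoc]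
  exact ⟨c, by rw [Units.inv_mul_eq_iff_eq_mul, mul_smul_comm, mul_one] at hc; exact hc⟩

theorem proportional_of_intertwining (h : IsIrreducibleFamily T) {f g : Module.End K V}
    (hf : IsUnit f) (hg : IsUnit g) (hfS : ∀ i, f * T i = S i * f)
    (hgS : ∀ i, g * T i = S i * g) : f ∝ g := by
  have := h.nontrivial
  obtain ⟨c, rfl⟩ := h.exists_eq_smul_of_intertwining hg hfS hgS
  exact ⟨c, left_ne_zero_of_smul hf.ne_zero, rfl⟩

end IsIrreducibleFamily

theorem IsProjRep.exists_quotient {K G V : Type*} [Field K] [Group G] [AddCommGroup V]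
    [Module K V] {T : G → Module.End K V} (h : IsProjRep T) (N : Subgroup G) [N.Normal]
    (hN : N ≤ h.scalarKernel) :
    ∃ S : G ⧸ N → Module.End K V, IsProjRep S ∧ ∀ g : G, S g ∝ T g := by
  have hout (g : G) : T (Quotient.out (g : G ⧸ N)) ∝ T g := by
    obtain ⟨k, hk⟩ := QuotientGroup.mk_out_eq_mul N g
    have hgk := (h.map_mul g k).trans ((Proportional.refl _).mul (hN k.2))
    rwa [mul_one, ← hk] at hgk
  refine ⟨fun q => T (Quotient.out q), ⟨fun q => h.isUnit _, fun a b => ?_⟩, hout⟩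
  induction a using QuotientGroup.induction_on with | _ a =>
  induction b using QuotientGroup.induction_on with | _ b =>
  rw [← QuotientGroup.mk_mul]
  exact (hout _).trans ((h.map_mul a b).trans ((hout a).symm.mul (hout b).symm))

section Imprimitivity

section Trace

variable {R M ι : Type*} [CommRing R] [AddCommGroup M] [Module R M]
  [DecidableEq ι] {N : ι → Submodule R M} [∀ i, Module.Free R (N i)]
  [∀ i, Module.Finite R (N i)]

theorem exists_trace_restrict_ne_zero_of_isInternal [Finite ι]
    (h : DirectSum.IsInternal N) {f : Module.End R M} {σ : ι → ι}
    (hf : ∀ i, Set.MapsTo f (N i) (N (σ i)))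
    (ht : LinearMap.trace R M f ≠ 0) :
    ∃ i, σ i = i ∧ ∀ hi : Set.MapsTo f (N i) (N i),
      LinearMap.trace R (N i) (f.restrict hi) ≠ 0 := by
  classical
  have := Fintype.ofFinite ι
  by_contra! hzero
  let b (i : ι) : Basis _ R (N i) := Module.Free.chooseBasis R (N i)
  refine ht ?_
  rw [LinearMap.trace_eq_matrix_trace R (h.collectedBasis b), Matrix.trace, Fintype.sum_sigma]
  refine Finset.sum_eq_zero fun i _ => ?_
  by_cases hi : σ i = i
  · obtain ⟨hm, htr⟩ := hzero i hi
    rw [LinearMap.trace_eq_matrix_trace R (b i), Matrix.trace] at htr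
    rw [← htr]
    refine Finset.sum_congr rfl fun k _ => ?_
    rw [Matrix.diag_apply, Matrix.diag_apply, LinearMap.toMatrix_apply, LinearMap.toMatrix_apply,
      DirectSum.IsInternal.collectedBasis_coe, h.collectedBasis_repr_of_mem b (hm (b i k).2)]
    rfl
  · refine Finset.sum_eq_zero fun k _ => ?_
    rw [Matrix.diag_apply, LinearMap.toMatrix_apply, DirectSum.IsInternal.collectedBasis_coe]
    exact h.collectedBasis_repr_of_mem_ne b hi (hf i (b i k).2)

theorem finrank_eq_sum_of_isInternal [Fintype ι] [StrongRankCondition R]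
    (h : DirectSum.IsInternal N) :
    finrank R M = ∑ i, finrank R (N i) := by
  rw [← Module.finrank_directSum]
  exact (LinearEquiv.ofBijective (DirectSum.coeLinearMap N) h).finrank_eq.symm

end Trace

variable {K G V : Type*} [Field K] [Group G] [AddCommGroup V] [Module K V]
  {T : G → Module.End K V} {Y : Submodule K V}

theorem IsProjRep.iSup_map_eq_top (h : IsProjRep T) (hI : IsIrreducibleFamily T) (hY : Y ≠ ⊥) :
    ⨆ x, Y.map (T x) = ⊤ := by
  refine (hI.eq_bot_or_eq_top _ fun x w hw => ?_).resolve_left fun hbot => hY ?_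
  · have hle : (⨆ x, Y.map (T x)).map (T x) ≤ ⨆ x, Y.map (T x) := by
      rw [Submodule.map_iSup]
      refine iSup_le fun g => ?_
      rw [h.submodule_map_map]
      exact le_iSup (fun x => Y.map (T x)) (x * g)
    exact hle (Submodule.mem_map_of_mem hw)
  · have hle := le_iSup (fun x => Y.map (T x)) 1
    rwa [hbot, h.submodule_map_one, le_bot_iff] at hle

/-- A proper nonzero subspace whose distinct translates are independent. For irreducible `T`, these
translates then form a system of imprimitivity. -/
structure IsImprimitivityBlock (T : G → Module.End K V) (Y : Submodule K V) : Prop where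
  ne_bot : Y ≠ ⊥
  ne_top : Y ≠ ⊤
  sSupIndep : sSupIndep (Set.range fun x => Y.map (T x))

namespace IsImprimitivityBlock

theorem isInternal (hY : IsImprimitivityBlock T Y) (h : IsProjRep T)
    (hI : IsIrreducibleFamily T) :
    DirectSum.IsInternal fun Z : Set.range fun x => Y.map (T x) => (Z : Submodule K V) := by
  refine DirectSum.isInternal_submodule_of_iSupIndep_of_iSup_eq_top
    ((sSupIndep_iff _).1 hY.sSupIndep) ?_
  rw [← sSup_eq_iSup', sSup_range, h.iSup_map_eq_top hI hY.ne_bot]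

theorem stabilizer_ne_top (hY : IsImprimitivityBlock T Y) (h : IsProjRep T)
    (hI : IsIrreducibleFamily T) : h.stabilizer Y ≠ ⊤ := by
  intro htop
  rcases hI.eq_bot_or_eq_top Y fun x y hy =>
    h.apply_mem_of_mem_stabilizer (htop ▸ Subgroup.mem_top x) hy with hbot | htop
  exacts [hY.ne_bot hbot, hY.ne_top htop]

theorem isIrreducibleFamily_stabilizer (hY : IsImprimitivityBlock T Y) (h : IsProjRep T)
    (hI : IsIrreducibleFamily T) :
    IsIrreducibleFamily fun x : h.stabilizer Y =>
      (T x).restrict fun _ => h.apply_mem_of_mem_stabilizer x.2 := by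
  refine ⟨Submodule.nontrivial_iff_ne_bot.2 hY.ne_bot, fun Y' hY' => ?_⟩
  set Z := Y'.map Y.subtype
  have hZY : Z ≤ Y := Submodule.map_subtype_le Y Y'
  refine or_iff_not_imp_left.2 fun hbot => ?_
  have hinj := Submodule.map_injective_of_injective Y.injective_subtype
  have hZ : Z ≠ ⊥ := fun h0 => hbot (hinj (h0.trans (Submodule.map_bot _).symm))
  set D := sSup ((Set.range fun x => Y.map (T x)) \ {Y})
  have hdisj : Disjoint Y D := hY.sSupIndep ⟨1, h.submodule_map_one Y⟩
  have hsup : Z ⊔ D = ⊤ := by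
    rw [eq_top_iff, ← h.iSup_map_eq_top hI hZ]
    refine iSup_le fun x => ?_
    by_cases hx : x ∈ h.stabilizer Y
    · refine le_sup_of_le_left ?_
      rintro _ ⟨_, ⟨y, hy, rfl⟩, rfl⟩
      exact ⟨_, hY' ⟨x, hx⟩ y hy, rfl⟩
    · exact le_sup_of_le_right ((Submodule.map_mono hZY).trans (le_sSup ⟨⟨x, rfl⟩, hx⟩))
  have hZeq : Z = Y := by
    have hmod := sup_inf_assoc_of_le D hZY
    rw [hsup, top_inf_eq, inf_comm, hdisj.eq_bot, sup_bot_eq] at hmod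
    exact hmod.symm
  exact hinj (hZeq.trans (Submodule.map_subtype_top Y).symm)

variable [Finite G] [FiniteDimensional K V]

theorem finrank_eq (hY : IsImprimitivityBlock T Y) (h : IsProjRep T)
    (hI : IsIrreducibleFamily T) :
    finrank K V = (h.stabilizer Y).index * finrank K Y := by
  classical
  have : Fintype (Set.range fun x => Y.map (T x)) := Fintype.ofFinite _
  have htranslate (Z : Set.range fun x => Y.map (T x)) :
      finrank K (Z : Submodule K V) = finrank K Y := by
    obtain ⟨_, x, rfl⟩ := Z
    exact (Submodule.equivMapOfInjective (T x) (h.injective x) Y).finrank_eq.symm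
  have hindex : (h.stabilizer Y).index = Fintype.card (Set.range fun x => Y.map (T x)) := by
    let _ := h.submoduleAction
    rw [← Nat.card_eq_fintype_card]
    exact MulAction.index_stabilizer G Y
  rw [finrank_eq_sum_of_isInternal (hY.isInternal h hI), Finset.sum_congr rfl fun Z _ =>
    htranslate Z, Finset.sum_const, smul_eq_mul, Finset.card_univ, hindex]

theorem exists_conj_trace_restrict_ne_zero (hY : IsImprimitivityBlock T Y) (h : IsProjRep T)
    (hI : IsIrreducibleFamily T) {g : G} (hg : LinearMap.trace K V (T g) ≠ 0) :
    ∃ (x : G) (hx : x⁻¹ * g * x ∈ h.stabilizer Y),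
      LinearMap.trace K Y ((T _).restrict fun _ => h.apply_mem_of_mem_stabilizer hx) ≠ 0 := by
  classical
  let _ := h.submoduleAction
  have : Fintype (Set.range fun x => Y.map (T x)) := Fintype.ofFinite _
  obtain ⟨⟨_, x, rfl⟩, hfix, htr⟩ := exists_trace_restrict_ne_zero_of_isInternal
    (hY.isInternal h hI) (σ := fun Z : MulAction.orbit G Y => g • Z)
    (fun Z v hv => Submodule.mem_map_of_mem hv) hg
  have hgx : g • x • Y = x • Y := congrArg Subtype.val hfix
  have hx : x⁻¹ * g * x ∈ h.stabilizer Y := by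
    rw [IsProjRep.stabilizer, MulAction.mem_stabilizer_iff, mul_smul, mul_smul, hgx, inv_smul_smul]
  have hmaps : Set.MapsTo (T g) (Y.map (T x)) (Y.map (T x)) := fun v hv =>
    hgx.le (Submodule.mem_map_of_mem hv)
  let e := Submodule.equivMapOfInjective (T x) (h.injective x) Y
  have hconj : (T g).restrict hmaps ∝
      e.conj ((T _).restrict fun _ => h.apply_mem_of_mem_stabilizer hx) := by
    have hmul := h.mul_map x (x⁻¹ * g * x)
    rw [show x * (x⁻¹ * g * x) * x⁻¹ = g by group] at hmul
    obtain ⟨c, hc, hmul⟩ := hmul.symm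
    refine ⟨c, hc, LinearMap.ext fun v => ?_⟩
    obtain ⟨y, rfl⟩ := e.surjective v
    refine Subtype.ext ?_
    rw [LinearMap.smul_apply, LinearEquiv.conj_apply_apply, LinearEquiv.symm_apply_apply]
    exact LinearMap.congr_fun hmul y
  refine ⟨x, hx, ?_⟩
  have htr' := hconj.trace_ne_zero (htr hmaps)
  rwa [LinearMap.trace_conj'] at htr'

end IsImprimitivityBlock

end Imprimitivity

theorem sSupIndep_image {α β : Type*} [CompleteLattice α] [CompleteLattice β]
    (f : CompleteLatticeHom α β) {s : Set α} (hs : sSupIndep s) : sSupIndep (f '' s) := by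
  rintro _ ⟨a, ha, rfl⟩
  have hdisj : Disjoint (f a) (f (sSup (s \ {a}))) := by
    rw [disjoint_iff, ← map_inf, (hs ha).eq_bot, map_bot]
  refine hdisj.mono_right (sSup_le ?_)
  rintro _ ⟨⟨b, hb, rfl⟩, hba⟩
  exact OrderHomClass.mono f (le_sSup ⟨hb, fun hab => hba (congrArg f hab)⟩)

section SemilinearEquiv

variable {R R' M M' : Type*} [Ring R] [Ring R'] [AddCommGroup M] [AddCommGroup M'] [Module R M]
  [Module R' M'] {σ : R →+* R'} {τ : R' →+* R} [RingHomInvPair σ τ] [RingHomInvPair τ σ]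

theorem isSimpleModule_map_of_semilinearEquiv (e : M ≃ₛₗ[σ] M') (S : Submodule R M)
    [hS : IsSimpleModule R S] : IsSimpleModule R' (S.map e.toLinearMap) := by
  rw [isSimpleModule_iff_isAtom] at hS ⊢
  exact ((Submodule.orderIsoMapComap e).isAtom_iff S).2 hS

theorem map_isotypicComponent_le (e : M ≃ₛₗ[σ] M') (S : Submodule R M) :
    (isotypicComponent R M S).map e.toLinearMap ≤
      isotypicComponent R' M' (S.map e.toLinearMap) := by
  rw [isotypicComponent, sSup_eq_iSup', Submodule.map_iSup]
  refine iSup_le fun m => le_sSup ?_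
  obtain ⟨m, ⟨φ⟩⟩ := m
  exact ⟨((e.submoduleMap m).symm.trans φ).trans (e.submoduleMap S)⟩

theorem map_isotypicComponent (e : M ≃ₛₗ[σ] M') (S : Submodule R M) :
    (isotypicComponent R M S).map e.toLinearMap =
      isotypicComponent R' M' (S.map e.toLinearMap) := by
  refine (map_isotypicComponent_le e S).antisymm ?_
  have hle := map_isotypicComponent_le e.symm (S.map e.toLinearMap)
  rw [(Submodule.map_symm_eq_iff e).2 rfl] at hle
  rw [← (Submodule.map_symm_eq_iff e (K := isotypicComponent R' M' _)).1 rfl]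
  exact Submodule.map_mono hle

end SemilinearEquiv

/-- The algebra spanned by the operators of a subgroup. Its submodules are the invariant
subspaces of the restriction to that subgroup. -/
abbrev operatorAlgebra {K G V : Type*} [Field K] [Group G] [AddCommGroup V] [Module K V]
    (T : G → Module.End K V) (N : Subgroup G) : Subalgebra K (Module.End K V) :=
  Algebra.adjoin K (T '' N)

section Clifford

variable {K G V : Type*} [Field K] [Group G] [AddCommGroup V] [Module K V]
  {T : G → Module.End K V} {N : Subgroup G}

theorem mem_operatorAlgebra {n : G} (hn : n ∈ N) : T n ∈ operatorAlgebra T N :=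
  Algebra.subset_adjoin (Set.mem_image_of_mem T hn)

theorem adjoin_le_adjoin_of_proportional {s t : Set (Module.End K V)}
    (hst : ∀ A ∈ s, ∃ B ∈ t, A ∝ B) : Algebra.adjoin K s ≤ Algebra.adjoin K t := by
  refine Algebra.adjoin_le fun A hA => ?_
  obtain ⟨B, hB, c, -, rfl⟩ := hst A hA
  exact Subalgebra.smul_mem _ (Algebra.subset_adjoin hB) c

theorem IsProjRep.conj_proportional (h : IsProjRep T) {g : G} {e : V ≃ₗ[K] V}
    (he : e.toLinearMap = T g) (n : G) : e.conjAlgEquiv K (T n) ∝ T (g * n * g⁻¹) := by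
  obtain ⟨c, hc, hmul⟩ := h.mul_map g n
  refine ⟨c, hc, LinearMap.ext fun v => ?_⟩
  obtain ⟨w, rfl⟩ := e.surjective v
  rw [LinearEquiv.conjAlgEquiv_apply_apply, LinearEquiv.symm_apply_apply]
  have hw := LinearMap.congr_fun hmul w
  rw [← he] at hw
  exact hw

theorem IsProjRep.map_conj_operatorAlgebra (h : IsProjRep T) [hN : N.Normal] {g : G}
    {e : V ≃ₗ[K] V} (he : e.toLinearMap = T g) :
    (operatorAlgebra T N).map (e.conjAlgEquiv K : _ →ₐ[K] _) = operatorAlgebra T N := by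
  rw [AlgHom.map_adjoin]
  refine (adjoin_le_adjoin_of_proportional ?_).antisymm (adjoin_le_adjoin_of_proportional ?_)
  · rintro _ ⟨_, ⟨n, hn, rfl⟩, rfl⟩
    exact ⟨_, ⟨_, hN.conj_mem n hn g, rfl⟩, h.conj_proportional he n⟩
  · rintro _ ⟨n, hn, rfl⟩
    have hconj := h.conj_proportional he (g⁻¹ * n * g)
    rw [show g * (g⁻¹ * n * g) * g⁻¹ = n by group] at hconj
    exact ⟨_, ⟨_, ⟨_, hN.conj_mem' n hn g, rfl⟩, rfl⟩, hconj.symm⟩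

theorem IsProjRep.exists_semilinearEquiv (h : IsProjRep T) [N.Normal] (g : G) :
    ∃ (σ τ : operatorAlgebra T N →+* operatorAlgebra T N) (_ : RingHomInvPair σ τ)
      (_ : RingHomInvPair τ σ) (e : V ≃ₛₗ[σ] V), ∀ m : Submodule (operatorAlgebra T N) V,
        (m.map e.toLinearMap).restrictScalars K = (m.restrictScalars K).map (T g) := by
  let e := LinearEquiv.ofBijective (T g) ((Module.End.isUnit_iff _).1 (h.isUnit g))
  let σ := ((e.conjAlgEquiv K).subalgebraMap (operatorAlgebra T N)).trans
    (Subalgebra.equivOfEq _ _ (h.map_conj_operatorAlgebra (g := g) rfl))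
  have hστ := RingHomInvPair.of_ringEquiv σ.toRingEquiv
  have hτσ := RingHomInvPair.of_ringEquiv_symm σ.toRingEquiv
  refine ⟨σ.toRingEquiv, σ.toRingEquiv.symm, hστ, hτσ,
    { e with map_smul' := fun a v => ?_ }, fun m => rfl⟩
  change e ((a : Module.End K V) v) = e ((a : Module.End K V) (e.symm (e v)))
  rw [e.symm_apply_apply]

theorem IsProjRep.isSemisimpleModule [FiniteDimensional K V] (h : IsProjRep T)
    (hI : IsIrreducibleFamily T) [N.Normal] : IsSemisimpleModule (operatorAlgebra T N) V := by
  have := hI.nontrivial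
  have : IsArtinian (operatorAlgebra T N) V := isArtinian_of_tower K inferInstance
  obtain ⟨U, hU⟩ := IsAtomic.exists_atom (Submodule (operatorAlgebra T N) V)
  have htranslate (g : G) : ∃ m : Submodule (operatorAlgebra T N) V,
      IsSimpleModule (operatorAlgebra T N) m ∧
        m.restrictScalars K = (U.restrictScalars K).map (T g) := by
    obtain ⟨σ, τ, _, _, e, he⟩ := h.exists_semilinearEquiv (N := N) g
    have := isSimpleModule_iff_isAtom.2 hU
    refine ⟨U.map e.toLinearMap, isSimpleModule_map_of_semilinearEquiv e U, he U⟩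
  choose m hm hmap using htranslate
  refine isSemisimpleModule_of_isSemisimpleModule_submodule' (p := m) (fun g => inferInstance) ?_
  rw [← Submodule.restrictScalars_eq_top_iff K, Submodule.restrictScalars_iSup]
  simp_rw [hmap]
  exact h.iSup_map_eq_top hI (by rw [Ne, Submodule.restrictScalars_eq_bot_iff]; exact hU.1)

theorem IsProjRep.exists_mem_isotypicComponents (h : IsProjRep T) [N.Normal] (g : G)
    {m : Submodule (operatorAlgebra T N) V} (hm : m ∈ isotypicComponents (operatorAlgebra T N) V) :
    ∃ m' ∈ isotypicComponents (operatorAlgebra T N) V,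
      m'.restrictScalars K = (m.restrictScalars K).map (T g) := by
  obtain ⟨σ, τ, _, _, e, he⟩ := h.exists_semilinearEquiv (N := N) g
  obtain ⟨S, hS, rfl⟩ := hm
  refine ⟨_, ⟨S.map e.toLinearMap, isSimpleModule_map_of_semilinearEquiv e S,
    map_isotypicComponent e S⟩, he _⟩

theorem IsProjRep.isImprimitivityBlock_isotypicComponent [FiniteDimensional K V] (h : IsProjRep T)
    (hI : IsIrreducibleFamily T) [N.Normal] {m : Submodule (operatorAlgebra T N) V}
    (hm : m ∈ isotypicComponents (operatorAlgebra T N) V) (hne : m ≠ ⊤) :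
    IsImprimitivityBlock T (m.restrictScalars K) where
  ne_bot := by
    rw [Ne, Submodule.restrictScalars_eq_bot_iff]
    exact (bot_lt_isotypicComponents hm).ne'
  ne_top := by rwa [Ne, Submodule.restrictScalars_eq_top_iff]
  sSupIndep := by
    have := h.isSemisimpleModule hI (N := N)
    refine (sSupIndep_image (Submodule.restrictScalarsLatticeHom K (operatorAlgebra T N) V)
      (sSupIndep_isotypicComponents (operatorAlgebra T N) V)).mono ?_
    rintro _ ⟨g, rfl⟩
    obtain ⟨m', hm', hmap⟩ := h.exists_mem_isotypicComponents g hm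
    exact ⟨m', hm', hmap⟩

theorem IsProjRep.exists_isIsotypicOfType_or_isImprimitivityBlock [FiniteDimensional K V]
    (h : IsProjRep T) (hI : IsIrreducibleFamily T) (N : Subgroup G) [N.Normal] :
    (∃ U : Submodule (operatorAlgebra T N) V, IsSimpleModule (operatorAlgebra T N) U ∧
      IsIsotypicOfType (operatorAlgebra T N) V U) ∨ ∃ Y, IsImprimitivityBlock T Y := by
  have := h.isSemisimpleModule hI (N := N)
  have := hI.nontrivial
  obtain ⟨U, hU⟩ := IsSemisimpleModule.exists_simple_submodule (operatorAlgebra T N) V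
  by_cases htop : isotypicComponent (operatorAlgebra T N) V U = ⊤
  · exact .inl ⟨U, hU, .of_isotypicComponent_eq_top htop⟩
  · exact .inr ⟨_, h.isImprimitivityBlock_isotypicComponent hI ⟨U, hU, rfl⟩ htop⟩

end Clifford

section SliceMaps

variable {K U W : Type*} [Field K] [AddCommGroup U] [Module K U] [AddCommGroup W] [Module K W]

/-- The slice map `id ⊗ φ`, pairing the right tensor factor with a functional. -/
def sliceRight (φ : Dual K W) : U ⊗[K] W →ₗ[K] U :=
  TensorProduct.rid K U ∘ₗ φ.lTensor U

/-- The slice map `ψ ⊗ id`, pairing the left tensor factor with a functional. -/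
def sliceLeft (ψ : Dual K U) : U ⊗[K] W →ₗ[K] W :=
  TensorProduct.lid K W ∘ₗ ψ.rTensor W

@[simp]
theorem sliceRight_tmul (φ : Dual K W) (u : U) (w : W) :
    sliceRight φ (u ⊗ₜ[K] w) = φ w • u := by
  simp [sliceRight]

@[simp]
theorem sliceLeft_tmul (ψ : Dual K U) (u : U) (w : W) :
    sliceLeft ψ (u ⊗ₜ[K] w) = ψ u • w := by
  simp [sliceLeft]

theorem dual_sliceLeft_eq_dual_sliceRight (ψ : Dual K U) (φ : Dual K W) (t : U ⊗[K] W) :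
    φ (sliceLeft ψ t) = ψ (sliceRight φ t) := by
  induction t with
  | zero => simp only [map_zero]
  | tmul u w => simp [mul_comm]
  | add s t hs ht => simp only [map_add, hs, ht]

theorem sliceRight_rTensor (φ : Dual K W) (A : Module.End K U) (t : U ⊗[K] W) :
    sliceRight φ (A.rTensor W t) = A (sliceRight φ t) := by
  induction t with
  | zero => simp only [map_zero]
  | tmul u w => simp
  | add s t hs ht => simp only [map_add, hs, ht]

theorem sliceLeft_map (ψ : Dual K U) (A : Module.End K U) (B : Module.End K W) (t : U ⊗[K] W) :
    sliceLeft ψ (TensorProduct.map A B t) = B (sliceLeft (ψ ∘ₗ A) t) := by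
  induction t with
  | zero => simp only [map_zero]
  | tmul u w => simp
  | add s t hs ht => simp only [map_add, hs, ht]

theorem nontrivial_of_nontrivial_tensorProduct (K U W : Type*) [Field K] [AddCommGroup U]
    [Module K U] [AddCommGroup W] [Module K W] [Nontrivial (U ⊗[K] W)] : Nontrivial W := by
  by_contra hW
  rw [not_nontrivial_iff_subsingleton] at hW
  exact not_subsingleton (U ⊗[K] W) inferInstance

theorem ext_sliceRight {s t : U ⊗[K] W}
    (h : ∀ φ : Dual K W, sliceRight φ s = sliceRight φ t) : s = t := by
  let b := Module.Free.chooseBasis K W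
  have hcoord (i : Module.Free.ChooseBasisIndex K W) (t : U ⊗[K] W) :
      TensorProduct.equivFinsuppOfBasisRight b t i = sliceRight (b.coord i) t := by
    induction t with
    | zero => simp
    | tmul u w => simp
    | add s t hs ht => simp only [map_add, Finsupp.add_apply, hs, ht]
  refine (TensorProduct.equivFinsuppOfBasisRight b).injective (Finsupp.ext fun i => ?_)
  rw [hcoord, hcoord, h]

theorem exists_dual_eq_one {u : U} (hu : u ≠ 0) : ∃ ψ : Dual K U, ψ u = 1 := by
  obtain ⟨ψ, hψ⟩ := Module.Projective.exists_dual_ne_zero K hu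
  exact ⟨(ψ u)⁻¹ • ψ, inv_mul_cancel₀ hψ⟩

theorem tmul_left_cancel {u : U} (hu : u ≠ 0) {w w' : W} (h : u ⊗ₜ[K] w = u ⊗ₜ w') : w = w' := by
  obtain ⟨ψ, hψ⟩ := exists_dual_eq_one (K := K) hu
  simpa [hψ] using congrArg (sliceLeft ψ) h

theorem tmul_right_cancel {w : W} (hw : w ≠ 0) {u u' : U} (h : u ⊗ₜ[K] w = u' ⊗ₜ w) : u = u' := by
  obtain ⟨φ, hφ⟩ := exists_dual_eq_one (K := K) hw
  simpa [hφ] using congrArg (sliceRight φ) h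

theorem proportional_left_of_tmul_eq_smul {A A' : Module.End K U} {w w' : W} (hA : A ≠ 0)
    (hw : w ≠ 0) {c : K} (h : ∀ u, A u ⊗ₜ[K] w = c • (A' u ⊗ₜ w')) : A ∝ A' := by
  obtain ⟨φ, hφ⟩ := exists_dual_eq_one (K := K) hw
  have heq : A = (c * φ w') • A' := LinearMap.ext fun u => by
    simpa [hφ, mul_smul] using congrArg (sliceRight φ) (h u)
  exact ⟨_, left_ne_zero_of_smul (heq ▸ hA), heq⟩

theorem proportional_right_of_tmul_eq_smul {B B' : Module.End K W} {u u' : U} (hB : B ≠ 0)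
    (hu : u ≠ 0) {c : K} (h : ∀ w, u ⊗ₜ[K] B w = c • (u' ⊗ₜ B' w)) : B ∝ B' := by
  obtain ⟨ψ, hψ⟩ := exists_dual_eq_one (K := K) hu
  have heq : B = (c * ψ u') • B' := LinearMap.ext fun w => by
    simpa [hψ, mul_smul] using congrArg (sliceLeft ψ) (h w)
  exact ⟨_, left_ne_zero_of_smul (heq ▸ hB), heq⟩

theorem IsIrreducibleFamily.exists_tmul_of_intertwining [IsAlgClosed K] [FiniteDimensional K U]
    {ι : Type*} {a b : ι → Module.End K U} (ha : IsIrreducibleFamily a)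
    {F : Module.End K (U ⊗[K] W)} (hne : F ≠ 0)
    (hF : ∀ i, F * (a i).rTensor W = (b i).rTensor W * F) :
    ∃ (R : Module.End K U) (Q : Module.End K W), ∀ u w, F (u ⊗ₜ w) = R u ⊗ₜ Q w := by
  let f (w : W) (φ : Dual K W) : Module.End K U :=
    sliceRight φ ∘ₗ F ∘ₗ (TensorProduct.mk K U W).flip w
  have hf (w : W) (φ : Dual K W) (i : ι) : f w φ * a i = b i * f w φ := LinearMap.ext fun u => by
    have hFi := congrArg (sliceRight φ) (LinearMap.congr_fun (hF i) (u ⊗ₜ w))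
    rwa [Module.End.mul_apply, Module.End.mul_apply, sliceRight_rTensor] at hFi
  obtain ⟨w₀, φ₀, hR⟩ : ∃ w φ, f w φ ≠ 0 := by
    by_contra! hzero
    refine hne (TensorProduct.ext' fun u w => ext_sliceRight fun φ => ?_)
    exact (LinearMap.congr_fun (hzero w φ) u).trans (map_zero _).symm
  set R := f w₀ φ₀
  obtain ⟨u₀, hu₀⟩ : ∃ u, R u ≠ 0 := by
    by_contra! hzero
    exact hR (LinearMap.ext hzero)
  obtain ⟨ψ, hψ⟩ := exists_dual_eq_one (K := K) hu₀
  refine ⟨R, sliceLeft ψ ∘ₗ F ∘ₗ TensorProduct.mk K U W u₀, fun u w =>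
    ext_sliceRight fun φ => ?_⟩
  obtain ⟨c, hc⟩ := ha.exists_eq_smul_of_intertwining
    (ha.isUnit_of_intertwining (hf w₀ φ₀) hR) (hf w φ) (hf w₀ φ₀)
  have hcoeff : φ (sliceLeft ψ (F (u₀ ⊗ₜ w))) = c := by
    have hfu₀ : sliceRight φ (F (u₀ ⊗ₜ w)) = c • R u₀ := LinearMap.congr_fun hc u₀
    rw [dual_sliceLeft_eq_dual_sliceRight, hfu₀, map_smul, hψ, smul_eq_mul, mul_one]
  rw [sliceRight_tmul]
  exact (LinearMap.congr_fun hc u).trans (congrArg (· • R u) hcoeff.symm)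

end SliceMaps

/-- A decomposition `V = U ⊗ W` adapted to a projective representation and a subgroup `N`: the
operators are pure tensors, and `N` acts irreducibly on `U` and trivially on `W`. -/
structure CliffordSplitting {K G V : Type*} [Field K] [Group G] [AddCommGroup V] [Module K V]
    (T : G → Module.End K V) (N : Subgroup G) (U W : Type*) [AddCommGroup U] [Module K U]
    [AddCommGroup W] [Module K W] where
  equiv : U ⊗[K] W ≃ₗ[K] V
  left : G → Module.End K U
  right : G → Module.End K W
  map_tmul : ∀ g u w, T g (equiv (u ⊗ₜ w)) = equiv (left g u ⊗ₜ right g w)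
  right_eq_one : ∀ n ∈ N, right n = 1
  irreducible_left : IsIrreducibleFamily fun n : N => left n

section Existence

variable {K G V : Type*} [Field K] [Group G] [AddCommGroup V] [Module K V]
  {T : G → Module.End K V} {N : Subgroup G}

theorem isIrreducibleFamily_lsmul_of_isSimpleModule {M : Type*} [AddCommGroup M] [Module K M]
    [Module (operatorAlgebra T N) M] [IsScalarTower K (operatorAlgebra T N) M]
    [hM : IsSimpleModule (operatorAlgebra T N) M] :
    IsIrreducibleFamily fun n : N =>
      Algebra.lsmul K K M (⟨T n, mem_operatorAlgebra n.2⟩ : operatorAlgebra T N) := by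
  refine ⟨hM.nontrivial, fun Y hY => ?_⟩
  have hsmul (a : operatorAlgebra T N) : ∀ y ∈ Y, a • y ∈ Y := by
    obtain ⟨a, ha⟩ := a
    induction ha using Algebra.adjoin_induction with
    | mem x hx => obtain ⟨n, hn, rfl⟩ := hx; exact hY ⟨n, hn⟩
    | algebraMap c =>
      intro y hy
      have hc := algebraMap_smul (operatorAlgebra T N) c y
      exact hc ▸ Y.smul_mem c hy
    | add a b ha hb iha ihb =>
      intro y hy
      have hab := add_smul (⟨a, ha⟩ : operatorAlgebra T N) ⟨b, hb⟩ y
      exact hab ▸ Y.add_mem (iha y hy) (ihb y hy)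
    | mul a b ha hb iha ihb =>
      intro y hy
      have hab := mul_smul (⟨a, ha⟩ : operatorAlgebra T N) ⟨b, hb⟩ y
      exact hab ▸ iha _ (ihb y hy)
  let Y' : Submodule (operatorAlgebra T N) M := { Y with smul_mem' := fun a _ => hsmul a _ }
  have hY' : Y'.restrictScalars K = Y := rfl
  rw [← hY', Submodule.restrictScalars_eq_bot_iff, Submodule.restrictScalars_eq_top_iff]
  exact eq_bot_or_eq_top Y'

theorem exists_equiv_tensorProduct_of_linearEquiv_pi {ι M : Type*} [Finite ι]
    [AddCommGroup M] [Module K M] [Module (operatorAlgebra T N) M]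
    [IsScalarTower K (operatorAlgebra T N) M] [IsSimpleModule (operatorAlgebra T N) M]
    (φ : V ≃ₗ[operatorAlgebra T N] (ι → M)) :
    ∃ (e : M ⊗[K] (ι → K) ≃ₗ[K] V) (r : N → Module.End K M), IsIrreducibleFamily r ∧
      ∀ n : N, T n ∘ₗ e.toLinearMap = e.toLinearMap ∘ₗ (r n).rTensor _ := by
  classical
  have := Fintype.ofFinite ι
  refine ⟨(TensorProduct.piScalarRight K K M ι).trans (φ.symm.restrictScalars K), _,
    isIrreducibleFamily_lsmul_of_isSimpleModule (T := T), fun n => TensorProduct.ext' fun u w => ?_⟩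
  have hφ := φ.symm.map_smul (⟨T n, mem_operatorAlgebra n.2⟩ : operatorAlgebra T N)
    (fun j => w j • u)
  refine hφ.symm.trans (congrArg φ.symm (funext fun j => ?_))
  exact smul_comm _ _ _

variable [IsAlgClosed K]

theorem IsProjRep.nonempty_cliffordSplitting {U W : Type*} [AddCommGroup U] [Module K U]
    [FiniteDimensional K U] [AddCommGroup W] [Module K W] [Nontrivial V] (h : IsProjRep T)
    [hN : N.Normal] (e : U ⊗[K] W ≃ₗ[K] V) {r : N → Module.End K U} (hr : IsIrreducibleFamily r)
    (he : ∀ n : N, T n ∘ₗ e.toLinearMap = e.toLinearMap ∘ₗ (r n).rTensor W) :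
    Nonempty (CliffordSplitting T N U W) := by
  classical
  have hsplit (g : G) : ∃ (R : Module.End K U) (Q : Module.End K W),
      (∀ u w, T g (e (u ⊗ₜ w)) = e (R u ⊗ₜ Q w)) ∧ (g ∈ N → Q = 1) := by
    by_cases hg : g ∈ N
    · exact ⟨r ⟨g, hg⟩, 1, fun u w => LinearMap.congr_fun (he ⟨g, hg⟩) (u ⊗ₜ w), fun _ => rfl⟩
    choose c _ hmul using h.mul_map g
    obtain ⟨R, Q, hRQ⟩ := hr.exists_tmul_of_intertwining (F := e.symm.conj (T g))
      (b := fun n : N => c n • r ⟨g * n * g⁻¹, hN.conj_mem n n.2 g⟩)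
      ((LinearEquiv.map_ne_zero_iff _).2 (h.isUnit g).ne_zero) fun n => by
        refine LinearMap.ext fun t => e.injective ?_
        have hn := LinearMap.congr_fun (he n) t
        have hgn := LinearMap.congr_fun (he ⟨g * n * g⁻¹, hN.conj_mem n n.2 g⟩)
          (e.symm (T g (e t)))
        have hmul' := LinearMap.congr_fun (hmul n) (e t)
        simp only [LinearMap.comp_apply, LinearEquiv.coe_coe, Module.End.mul_apply,
          LinearMap.smul_apply, LinearEquiv.conj_apply_apply, e.symm_symm, e.apply_symm_apply,
          LinearMap.rTensor_smul, map_smul] at hn hgn hmul' ⊢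
        rw [← hn, hmul', hgn]
    refine ⟨R, Q, fun u w => ?_, fun hg' => (hg hg').elim⟩
    rw [← hRQ, LinearEquiv.conj_apply_apply, e.symm_symm, e.apply_symm_apply]
  choose R Q hRQ hQ using hsplit
  have hRr (n : N) : R n = r n := by
    have := e.toEquiv.nontrivial
    have := nontrivial_of_nontrivial_tensorProduct K U W
    obtain ⟨w, hw⟩ := exists_ne (0 : W)
    refine LinearMap.ext fun u => tmul_right_cancel (K := K) hw (e.injective ?_)
    have hn := LinearMap.congr_fun (he n) (u ⊗ₜ w)
    have hn' := hRQ n u w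
    rw [hQ n n.2] at hn'
    exact hn'.symm.trans hn
  exact ⟨⟨e, R, Q, hRQ, hQ, by simpa only [hRr] using hr⟩⟩

theorem IsProjRep.exists_cliffordSplitting_of_isIsotypicOfType [FiniteDimensional K V]
    (h : IsProjRep T) (hI : IsIrreducibleFamily T) [N.Normal]
    {U : Submodule (operatorAlgebra T N) V} [hU : IsSimpleModule (operatorAlgebra T N) U]
    (hiso : IsIsotypicOfType (operatorAlgebra T N) V U) :
    ∃ k, Nonempty (CliffordSplitting T N (U.restrictScalars K) (Fin k → K)) := by
  have := hI.nontrivial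
  have := h.isSemisimpleModule hI (N := N)
  have : Module.Finite (operatorAlgebra T N) V := Module.Finite.of_restrictScalars_finite K _ _
  obtain ⟨k, ⟨φ⟩⟩ : ∃ k, Nonempty (V ≃ₗ[operatorAlgebra T N] (Fin k → U.restrictScalars K)) :=
    hiso.linearEquiv_fun
  have : IsSimpleModule (operatorAlgebra T N) (U.restrictScalars K) := hU
  obtain ⟨e, r, hr, he⟩ := exists_equiv_tensorProduct_of_linearEquiv_pi φ
  exact ⟨k, h.nonempty_cliffordSplitting e hr he⟩

theorem IsProjRep.exists_cliffordSplitting_or_isImprimitivityBlock [FiniteDimensional K V]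
    (h : IsProjRep T) (hI : IsIrreducibleFamily T) (N : Subgroup G) [N.Normal] :
    (∃ (U : Submodule K V) (k : ℕ), Nonempty (CliffordSplitting T N U (Fin k → K))) ∨
      ∃ Y, IsImprimitivityBlock T Y := by
  refine (h.exists_isIsotypicOfType_or_isImprimitivityBlock hI N).imp_left ?_
  rintro ⟨U, _, hiso⟩
  exact ⟨_, h.exists_cliffordSplitting_of_isIsotypicOfType hI hiso⟩

end Existence

namespace CliffordSplitting

variable {K G V : Type*} [Field K] [Group G] [AddCommGroup V] [Module K V]
  {T : G → Module.End K V} {N : Subgroup G} {U W : Type*} [AddCommGroup U] [Module K U]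
  [AddCommGroup W] [Module K W]

theorem nontrivial_left (D : CliffordSplitting T N U W) : Nontrivial U :=
  D.irreducible_left.nontrivial

theorem nontrivial_right [Nontrivial V] (D : CliffordSplitting T N U W) : Nontrivial W := by
  have := D.equiv.toEquiv.nontrivial
  exact nontrivial_of_nontrivial_tensorProduct K U W

theorem ext_tmul (D : CliffordSplitting T N U W) {A B : Module.End K V}
    (h : ∀ u w, A (D.equiv (u ⊗ₜ w)) = B (D.equiv (u ⊗ₜ w))) : A = B := by
  refine D.equiv.symm.conj.injective (TensorProduct.ext' fun u w => ?_)
  simpa only [LinearEquiv.conj_apply_apply, LinearEquiv.symm_symm] using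
    congrArg D.equiv.symm (h u w)

theorem eq_conj_map (D : CliffordSplitting T N U W) (g : G) :
    T g = D.equiv.conj (TensorProduct.map (D.left g) (D.right g)) := D.ext_tmul fun u w => by
  rw [D.map_tmul, LinearEquiv.conj_apply_apply, LinearEquiv.symm_apply_apply,
    TensorProduct.map_tmul]

theorem trace_eq [FiniteDimensional K U] [FiniteDimensional K W] (D : CliffordSplitting T N U W)
    (g : G) : LinearMap.trace K V (T g) =
      LinearMap.trace K U (D.left g) * LinearMap.trace K W (D.right g) := by
  rw [D.eq_conj_map, LinearMap.trace_conj', LinearMap.trace_tensorProduct']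

theorem finrank_eq (D : CliffordSplitting T N U W) :
    finrank K V = finrank K U * finrank K W := by
  rw [← D.equiv.finrank_eq, Module.finrank_tensorProduct]

theorem right_injective (D : CliffordSplitting T N U W) (h : IsProjRep T) (g : G) :
    Function.Injective (D.right g) := by
  have := D.nontrivial_left
  obtain ⟨u, hu⟩ := exists_ne (0 : U)
  refine fun w w' hw => tmul_left_cancel (K := K) hu (D.equiv.injective (h.injective g ?_))
  rw [D.map_tmul, D.map_tmul, hw]

theorem left_injective [Nontrivial V] (D : CliffordSplitting T N U W) (h : IsProjRep T) (g : G) :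
    Function.Injective (D.left g) := by
  have := D.nontrivial_right
  obtain ⟨w, hw⟩ := exists_ne (0 : W)
  refine fun u u' hu => tmul_right_cancel (K := K) hw (D.equiv.injective (h.injective g ?_))
  rw [D.map_tmul, D.map_tmul, hu]

theorem exists_tmul_mul_eq_smul (D : CliffordSplitting T N U W) (h : IsProjRep T) (g g' : G) :
    ∃ c : K, ∀ u w, D.left (g * g') u ⊗ₜ[K] D.right (g * g') w =
      c • (D.left g (D.left g' u) ⊗ₜ[K] D.right g (D.right g' w)) := by
  obtain ⟨c, -, hc⟩ := h.map_mul g g'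
  refine ⟨c, fun u w => D.equiv.injective ?_⟩
  rw [← D.map_tmul, hc, LinearMap.smul_apply, Module.End.mul_apply, D.map_tmul, D.map_tmul,
    map_smul]

theorem isProjRep_left [Nontrivial V] [FiniteDimensional K U] (D : CliffordSplitting T N U W)
    (h : IsProjRep T) : IsProjRep D.left where
  isUnit g := (Module.End.isUnit_iff _).2
    ⟨D.left_injective h g, LinearMap.surjective_of_injective (D.left_injective h g)⟩
  map_mul g g' := by
    have := D.nontrivial_left
    have := D.nontrivial_right
    obtain ⟨w, hw⟩ := exists_ne (0 : W)
    obtain ⟨c, hc⟩ := D.exists_tmul_mul_eq_smul h g g'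
    refine proportional_left_of_tmul_eq_smul (fun h0 => ?_)
      ((map_ne_zero_iff _ (D.right_injective h (g * g'))).2 hw) (fun u => hc u w)
    obtain ⟨u, hu⟩ := exists_ne (0 : U)
    exact (map_ne_zero_iff _ (D.left_injective h (g * g'))).2 hu (LinearMap.congr_fun h0 u)

theorem isProjRep_right [Nontrivial V] [FiniteDimensional K W] (D : CliffordSplitting T N U W)
    (h : IsProjRep T) : IsProjRep D.right where
  isUnit g := (Module.End.isUnit_iff _).2
    ⟨D.right_injective h g, LinearMap.surjective_of_injective (D.right_injective h g)⟩
  map_mul g g' := by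
    have := D.nontrivial_left
    have := D.nontrivial_right
    obtain ⟨u, hu⟩ := exists_ne (0 : U)
    obtain ⟨c, hc⟩ := D.exists_tmul_mul_eq_smul h g g'
    refine proportional_right_of_tmul_eq_smul (fun h0 => ?_)
      ((map_ne_zero_iff _ (D.left_injective h (g * g'))).2 hu) (fun w => hc u w)
    obtain ⟨w, hw⟩ := exists_ne (0 : W)
    exact (map_ne_zero_iff _ (D.right_injective h (g * g'))).2 hw (LinearMap.congr_fun h0 w)

theorem sliceLeft_equiv_symm (D : CliffordSplitting T N U W) (ψ : Dual K U) (g : G) (v : V) :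
    sliceLeft ψ (D.equiv.symm (T g v)) =
      D.right g (sliceLeft (ψ ∘ₗ D.left g) (D.equiv.symm v)) := by
  rw [← sliceLeft_map, D.eq_conj_map, LinearEquiv.conj_apply_apply, LinearEquiv.symm_apply_apply]

theorem isIrreducibleFamily_right {ι : Type*} (D : CliffordSplitting T N U W) {f : ι → G}
    (hI : IsIrreducibleFamily fun i => T (f i)) : IsIrreducibleFamily fun i => D.right (f i) := by
  have := hI.nontrivial
  have := D.nontrivial_left
  obtain ⟨u, hu⟩ := exists_ne (0 : U)
  refine ⟨D.nontrivial_right, fun Y hY => ?_⟩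
  let Z : Submodule K V := ⨅ ψ : Dual K U, Y.comap (sliceLeft ψ ∘ₗ D.equiv.symm.toLinearMap)
  have hmem {v : V} : v ∈ Z ↔ ∀ ψ : Dual K U, sliceLeft ψ (D.equiv.symm v) ∈ Y := by
    simp [Z, Submodule.mem_iInf]
  have hZ := hI.eq_bot_or_eq_top Z fun i z hz => hmem.2 fun ψ => by
    rw [D.sliceLeft_equiv_symm]
    exact hY i _ (hmem.1 hz _)
  refine hZ.imp (fun hbot => (Submodule.eq_bot_iff _).2 fun w hw => ?_)
    (fun htop => Submodule.eq_top_iff'.2 fun w => ?_)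
  · have huw : D.equiv (u ⊗ₜ w) ∈ Z := hmem.2 fun ψ => by
      rw [LinearEquiv.symm_apply_apply, sliceLeft_tmul]
      exact Y.smul_mem _ hw
    rw [hbot, Submodule.mem_bot, LinearEquiv.map_eq_zero_iff] at huw
    exact tmul_left_cancel (K := K) hu (huw.trans (TensorProduct.tmul_zero W u).symm)
  · obtain ⟨ψ, hψ⟩ := exists_dual_eq_one (K := K) hu
    have hw := hmem.1 (htop ▸ Submodule.mem_top : D.equiv (u ⊗ₜ w) ∈ Z) ψ
    rwa [LinearEquiv.symm_apply_apply, sliceLeft_tmul, hψ, one_smul] at hw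

end CliffordSplitting

section Burnside

variable {K ι V : Type*} [Field K] [IsAlgClosed K] [AddCommGroup V] [Module K V]
  [FiniteDimensional K V] {T : ι → Module.End K V}

theorem IsIrreducibleFamily.isSimpleModule_adjoin {K ι V : Type*} [Field K] [AddCommGroup V]
    [Module K V] {T : ι → Module.End K V} (h : IsIrreducibleFamily T) :
    IsSimpleModule (Algebra.adjoin K (Set.range T)) V := by
  have := h.nontrivial
  refine { eq_bot_or_eq_top := fun W => ?_ }
  refine (h.eq_bot_or_eq_top (W.restrictScalars K) fun i w hw => ?_).imp
    (Submodule.restrictScalars_eq_bot_iff K _ _).1 (Submodule.restrictScalars_eq_top_iff K _ _).1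
  exact W.smul_mem ⟨T i, Algebra.subset_adjoin ⟨i, rfl⟩⟩ hw

/-- Burnside's theorem: by Schur's lemma the operators commuting with the family are the scalars,
so every linear operator is in the bicommutant. -/
theorem IsIrreducibleFamily.adjoin_eq_top (h : IsIrreducibleFamily T) :
    Algebra.adjoin K (Set.range T) = ⊤ := by
  have := h.isSimpleModule_adjoin
  refine eq_top_iff.2 fun f _ => ?_
  let bicommuting : Module.End (Module.End (Algebra.adjoin K (Set.range T)) V) V :=
    { f with
      map_smul' := fun x v => by
        obtain ⟨c, rfl⟩ := (IsSimpleModule.algebraMap_end_bijective_of_isAlgClosed K).2 x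
        exact f.map_smul c v }
  let b := Module.finBasis K V
  classical
  obtain ⟨a, ha⟩ := jacobson_density bicommuting (Finset.univ.image b)
  have hfa : f = a := b.ext fun i => ha (b i) (Finset.mem_image_of_mem b (Finset.mem_univ i))
  exact hfa ▸ a.2

theorem IsIrreducibleFamily.commute_of_forall_commute {A : Type*} [Ring A] [Algebra K A]
    (h : IsIrreducibleFamily T) (j : Module.End K V →ₐ[K] A) {a : A}
    (ha : ∀ i, Commute a (j (T i))) (x : Module.End K V) : Commute a (j x) := by
  have hle : Algebra.adjoin K (Set.range T) ≤ (Subalgebra.centralizer K {a}).comap j := by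
    refine Algebra.adjoin_le ?_
    rintro _ ⟨i, rfl⟩
    exact Subalgebra.mem_centralizer_iff K |>.2 fun b hb => hb ▸ ha i
  have hx := hle (h.adjoin_eq_top ▸ Algebra.mem_top (x := x))
  exact Subalgebra.mem_centralizer_iff K |>.1 hx a rfl

end Burnside

theorem exists_eq_smul_trace_of_mul_comm {K U : Type*} [Field K] [AddCommGroup U] [Module K U]
    [FiniteDimensional K U] (ψ : Module.End K U →ₗ[K] K) (hψ : ∀ x y, ψ (x * y) = ψ (y * x)) :
    ∃ c : K, ψ = c • LinearMap.trace K U := by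
  cases subsingleton_or_nontrivial U
  · exact ⟨0, LinearMap.ext fun x => by
      rw [Subsingleton.elim x 0, _root_.map_zero, _root_.map_zero]⟩
  obtain ⟨u₀, hu₀⟩ := exists_ne (0 : U)
  obtain ⟨φ₀, hφ₀⟩ := exists_dual_eq_one (K := K) hu₀
  let E (φ : Dual K U) (u : U) : Module.End K U := φ.smulRight u
  have hE (φ : Dual K U) (u : U) : E φ u = E φ₀ u * E φ u₀ := by
    ext v
    simp [E, hφ₀]
  have hE' (φ : Dual K U) (u : U) : E φ u₀ * E φ₀ u = φ u • E φ₀ u₀ := by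
    ext v
    simp [E, smul_smul, mul_comm]
  refine ⟨ψ (E φ₀ u₀), LinearMap.ext fun x => ?_⟩
  obtain ⟨t, rfl⟩ := (dualTensorHomEquiv K U U).surjective x
  induction t with
  | zero => simp only [_root_.map_zero]
  | add s t hs ht => simp only [_root_.map_add, hs, ht]
  | tmul φ u =>
    have hφu : dualTensorHomEquiv K U U (φ ⊗ₜ u) = E φ u := LinearMap.ext fun v => by simp [E]
    have htrace : LinearMap.trace K U (E φ u) = φ u := LinearMap.trace_smulRight φ u
    rw [hφu, LinearMap.smul_apply, htrace, hE, hψ, hE', map_smul, smul_eq_mul, smul_eq_mul,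
      mul_comm]

section ScalarCommutator

variable {K V : Type*} [Field K] [AddCommGroup V] [Module K V] {A B : Module.End K V} {β : K}

theorem pow_mul_eq_pow_smul_mul_pow (hAB : A * B = β • (B * A)) (k : ℕ) :
    A ^ k * B = β ^ k • (B * A ^ k) := by
  induction k with
  | zero => simp
  | succ k ih =>
    rw [pow_succ, mul_assoc, hAB, mul_smul_comm, ← mul_assoc, ih, smul_mul_assoc, smul_smul,
      mul_assoc, pow_succ, mul_comm]

theorem pow_finrank_eq_one_of_mul_eq_smul (hA : IsUnit A) (hB : IsUnit B)
    (hAB : A * B = β • (B * A)) : β ^ finrank K V = 1 := by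
  have hdet := congrArg LinearMap.det hAB
  rw [LinearMap.det_smul, map_mul LinearMap.det B A, mul_comm (LinearMap.det B), ← map_mul] at hdet
  exact mul_eq_right₀ ((hA.mul hB).map LinearMap.det).ne_zero |>.1 hdet.symm

theorem eq_one_of_mul_eq_smul_of_trace_ne_zero (hB : IsUnit B) (hAB : A * B = β • (B * A))
    (hA : LinearMap.trace K V A ≠ 0) : β = 1 := by
  obtain ⟨u, rfl⟩ := hB
  have htrace : LinearMap.trace K V A = β * LinearMap.trace K V A := by
    calc LinearMap.trace K V A = LinearMap.trace K V (A * u * ↑u⁻¹) := by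
          rw [Units.mul_inv_cancel_right]
      _ = β * LinearMap.trace K V A := by
          rw [hAB, smul_mul_assoc, map_smul, LinearMap.trace_mul_cycle, Units.inv_mul, one_mul,
            smul_eq_mul]
  exact mul_eq_right₀ hA |>.1 htrace.symm

end ScalarCommutator

namespace IsProjRep

section Span

variable {K G V : Type*} [Field K] [IsAlgClosed K] [Group G] [AddCommGroup V] [Module K V]
  [FiniteDimensional K V] {T : G → Module.End K V}

theorem span_range_eq_top (h : IsProjRep T) (hI : IsIrreducibleFamily T) :
    Submodule.span K (Set.range T) = ⊤ := by
  rw [← Algebra.adjoin_eq_span_of_subset, hI.adjoin_eq_top, Algebra.top_toSubmodule]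
  have hspan {g : G} {f : Module.End K V} (hf : f ∝ T g) :
      f ∈ Submodule.span K (Set.range T) := by
    obtain ⟨c, -, rfl⟩ := hf
    exact Submodule.smul_mem _ c (Submodule.subset_span ⟨g, rfl⟩)
  suffices hclosure : ∀ f ∈ Submonoid.closure (Set.range T), ∃ g, f ∝ T g from
    fun f hf => (hclosure f hf).elim fun _ => hspan
  intro f hf
  induction hf using Submonoid.closure_induction with
  | mem f hf =>
    obtain ⟨g, rfl⟩ := hf
    exact ⟨g, Proportional.refl _⟩
  | one => exact ⟨1, h.map_one.symm⟩
  | mul f f' _ _ hf hf' =>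
    obtain ⟨g, hg⟩ := hf
    obtain ⟨g', hg'⟩ := hf'
    exact ⟨g * g', (hg.mul hg').trans (h.map_mul g g').symm⟩

theorem mem_scalarKernel_of_forall_commute (h : IsProjRep T) {ι : Type*} {S : ι → Module.End K V}
    (hS : IsIrreducibleFamily S) {x : G} (hx : ∀ i, Commute (T x) (S i)) :
    x ∈ h.scalarKernel :=
  hS.proportional_of_intertwining (h.isUnit x) isUnit_one hx fun i => Commute.one_left (S i)

end Span

section Abelian

variable {K A V : Type*} [Field K] [Group A] [IsMulCommutative A] [AddCommGroup V] [Module K V]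
  {T : A → Module.End K V}

theorem mul_comm_proportional (h : IsProjRep T) (a b : A) : T a * T b ∝ T b * T a := by
  refine (h.map_mul a b).symm.trans ?_
  rw [mul_comm' a b]
  exact h.map_mul b a

variable [IsAlgClosed K] [FiniteDimensional K V]

theorem pow_finrank_mem_scalarKernel (h : IsProjRep T) (hI : IsIrreducibleFamily T) (x : A) :
    x ^ finrank K V ∈ h.scalarKernel := by
  refine (h.map_pow x _).trans ?_
  refine hI.proportional_of_intertwining ((h.isUnit x).pow _) isUnit_one (fun a => ?_)
    fun a => Commute.one_left (T a)
  obtain ⟨β, -, hβ⟩ := h.mul_comm_proportional x a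
  rw [pow_mul_eq_pow_smul_mul_pow hβ,
    pow_finrank_eq_one_of_mul_eq_smul (h.isUnit x) (h.isUnit a) hβ, one_smul]

theorem mem_scalarKernel_of_trace_ne_zero (h : IsProjRep T) (hI : IsIrreducibleFamily T) {x : A}
    (hx : LinearMap.trace K V (T x) ≠ 0) : x ∈ h.scalarKernel := by
  refine h.mem_scalarKernel_of_forall_commute hI fun a => ?_
  obtain ⟨β, -, hβ⟩ := h.mul_comm_proportional x a
  rwa [eq_one_of_mul_eq_smul_of_trace_ne_zero (h.isUnit a) hβ hx, one_smul] at hβ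

theorem linearIndependent_of_scalarKernel_eq_bot [CharZero K] [Finite A] (h : IsProjRep T)
    (hI : IsIrreducibleFamily T) (hker : h.scalarKernel = ⊥) : LinearIndependent K T := by
  have := hI.nontrivial
  have := Fintype.ofFinite A
  have htrace_ne (m : A) : LinearMap.trace K V (T m⁻¹ * T m) ≠ 0 := by
    have hone : (1 : Module.End K V) ∝ T m⁻¹ * T m := by
      simpa only [inv_inv] using (h.mul_map_inv m⁻¹).symm
    refine hone.trace_ne_zero ?_
    rw [LinearMap.trace_one]
    exact Nat.cast_ne_zero.2 Module.finrank_pos.ne'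
  have htrace_eq {m n : A} (hmn : n ≠ m) : LinearMap.trace K V (T m⁻¹ * T n) = 0 := by
    by_contra htr
    have hmem := h.mem_scalarKernel_of_trace_ne_zero hI ((h.map_mul m⁻¹ n).symm.trace_ne_zero htr)
    rw [hker, Subgroup.mem_bot, inv_mul_eq_one] at hmem
    exact hmn hmem.symm
  refine Fintype.linearIndependent_iff.2 fun a ha m => ?_
  have hsum := congrArg (fun M => LinearMap.trace K V (T m⁻¹ * M)) ha
  simp only [Finset.mul_sum, map_sum, mul_zero, _root_.map_zero, mul_smul_comm, map_smul] at hsum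
  rw [Finset.sum_eq_single m (fun n _ hn => by rw [htrace_eq hn, smul_zero]) (by simp)] at hsum
  exact (smul_eq_zero.1 hsum).resolve_right (htrace_ne m)

theorem card_eq_finrank_mul_finrank [CharZero K] [Finite A] (h : IsProjRep T)
    (hI : IsIrreducibleFamily T) (hker : h.scalarKernel = ⊥) :
    Nat.card A = finrank K V * finrank K V := by
  have := Fintype.ofFinite A
  let b := Basis.mk (h.linearIndependent_of_scalarKernel_eq_bot hI hker)
    (h.span_range_eq_top hI).ge
  rw [Nat.card_eq_fintype_card, ← Module.finrank_eq_card_basis b, Module.finrank_linearMap]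

end Abelian

end IsProjRep

section Counting

variable {G : Type*} [Group G]

theorem pow_orderOf_mk_mem (N : Subgroup G) [N.Normal] (g : G) :
    g ^ orderOf (g : G ⧸ N) ∈ N := by
  rw [← QuotientGroup.eq_one_iff, QuotientGroup.mk_pow, pow_orderOf_eq_one]

theorem orderOf_dvd_orderOf_mk_mul {N : Subgroup G} [N.Normal] {e : ℕ}
    (he : ∀ x ∈ N, x ^ e = 1) (g : G) : orderOf g ∣ orderOf (g : G ⧸ N) * e :=
  orderOf_dvd_of_pow_eq_one (by rw [pow_mul, he _ (pow_orderOf_mk_mem N g)])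

theorem orderOf_dvd_orderOf_mk_mul_card (N : Subgroup G) [N.Normal] (g : G) :
    orderOf g ∣ orderOf (g : G ⧸ N) * Nat.card N := by
  refine orderOf_dvd_orderOf_mk_mul (fun x hx => ?_) g
  exact congrArg Subtype.val (pow_card_eq_one' (x := (⟨x, hx⟩ : N)))

theorem orderOf_inv_mul_mul_self (g x : G) : orderOf (x⁻¹ * g * x) = orderOf g := by
  simpa using (MulAut.conj x⁻¹).orderOf_eq g

variable [Finite G]

theorem card_sup_zpowers (N : Subgroup G) [N.Normal] (g : G) :
    Nat.card ↥(N ⊔ Subgroup.zpowers g) = orderOf (g : G ⧸ N) * Nat.card N := by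
  have hindex : (N ⊔ Subgroup.zpowers g).index = (Subgroup.zpowers (g : G ⧸ N)).index := by
    rw [← QuotientGroup.comap_map_mk', MonoidHom.map_zpowers]
    exact Subgroup.index_comap_of_surjective _ (QuotientGroup.mk'_surjective N)
  refine Nat.eq_of_mul_eq_mul_right
    (Nat.pos_of_ne_zero (N ⊔ Subgroup.zpowers g).index_ne_zero_of_finite) ?_
  calc Nat.card ↥(N ⊔ Subgroup.zpowers g) * (N ⊔ Subgroup.zpowers g).index
      = Nat.card (G ⧸ N) * Nat.card N := by
        rw [Subgroup.card_mul_index, ← Subgroup.card_eq_card_quotient_mul_card_subgroup]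
    _ = orderOf (g : G ⧸ N) * Nat.card N * (N ⊔ Subgroup.zpowers g).index := by
        rw [← (Subgroup.zpowers (g : G ⧸ N)).card_mul_index, Nat.card_zpowers, hindex,
          mul_right_comm]

theorem card_quotient_lt_card {N : Subgroup G} (hN : N ≠ ⊥) : Nat.card (G ⧸ N) < Nat.card G := by
  rw [N.card_eq_card_quotient_mul_card_subgroup]
  exact lt_mul_of_one_lt_right Nat.card_pos ((Subgroup.one_lt_card_iff_ne_bot N).2 hN)

theorem card_lt_card_of_ne_top {H : Subgroup G} (hH : H ≠ ⊤) : Nat.card H < Nat.card G :=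
  (Subgroup.card_le_card_group H).lt_of_ne fun h => hH (H.eq_top_of_card_eq h)

end Counting

/-- The inductive hypothesis: the projective form of Wilde's conjecture for all groups `G` and
spaces `V` with `|G| + dim V < n`. -/
def WildeBelow (K : Type u) [Field K] (n : ℕ) : Prop :=
  ∀ (G : Type v) (V : Type u) [Group G] [Finite G] [AddCommGroup V] [Module K V]
    [FiniteDimensional K V] (T : G → Module.End K V), IsProjRep T → IsIrreducibleFamily T →
    Nat.card G + finrank K V < n → ∀ g, LinearMap.trace K V (T g) ≠ 0 →
    orderOf g * finrank K V ∣ Nat.card G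

theorem CliffordSplitting.isIrreducibleFamily_of_finrank_eq {K G V U W : Type*} [Field K]
    [Group G] [AddCommGroup V] [Module K V] [FiniteDimensional K V] [AddCommGroup U] [Module K U]
    [AddCommGroup W] [Module K W] [Nontrivial V] {T : G → Module.End K V} {N : Subgroup G}
    (D : CliffordSplitting T N U W)
    (hdim : finrank K U = finrank K V) : IsIrreducibleFamily fun x : N => T x := by
  have := D.nontrivial_right
  obtain ⟨w, hw⟩ := exists_ne (0 : W)
  let f : U →ₗ[K] V := D.equiv.toLinearMap ∘ₗ (TensorProduct.mk K U W).flip w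
  have hinj : Function.Injective f := fun u u' huu' =>
    tmul_right_cancel (K := K) hw (D.equiv.injective huu')
  refine D.irreducible_left.of_linearEquiv (LinearEquiv.ofInjectiveOfFinrankEq f hinj hdim)
    fun x u => ?_
  change D.equiv (D.left x u ⊗ₜ w) = T x (D.equiv (u ⊗ₜ w))
  rw [D.map_tmul, D.right_eq_one x x.2, Module.End.one_apply]

namespace WildeBelow

variable {K : Type u} [Field K] {G : Type v} [Group G] [Finite G] {V : Type u} [AddCommGroup V]
  [Module K V] {T : G → Module.End K V} {g : G} {n : ℕ}

theorem mono {m : ℕ} (hn : WildeBelow.{u, v} K n) (hmn : m ≤ n) : WildeBelow.{u, v} K m :=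
  fun G V _ _ _ _ _ T h hI hlt => hn G V T h hI (hlt.trans_le hmn)

theorem orderOf_mk_mul_finrank_dvd [FiniteDimensional K V] (hn : WildeBelow.{u, v} K n)
    (h : IsProjRep T) (hI : IsIrreducibleFamily T) (hg : LinearMap.trace K V (T g) ≠ 0)
    {N : Subgroup G} [N.Normal] (hN : N ≤ h.scalarKernel)
    (hcard : Nat.card (G ⧸ N) + finrank K V < n) :
    orderOf (g : G ⧸ N) * finrank K V ∣ Nat.card (G ⧸ N) := by
  obtain ⟨S, hS, hST⟩ := h.exists_quotient N hN
  exact hn _ _ S hS (hI.of_forall_exists_proportional fun x => ⟨x, (hST x).symm⟩) hcard g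
    ((hST g).symm.trace_ne_zero hg)

theorem dvd_of_cliffordSplitting (hn : WildeBelow.{u, v} K (Nat.card G + finrank K V))
    (h : IsProjRep T) (hI : IsIrreducibleFamily T) (hg : LinearMap.trace K V (T g) ≠ 0)
    {N : Subgroup G} [N.Normal] (hN : N ≠ ⊥) {U W : Type u} [AddCommGroup U] [Module K U]
    [FiniteDimensional K U] [AddCommGroup W] [Module K W] [FiniteDimensional K W]
    (D : CliffordSplitting T N U W)
    (hU : Nat.card ↥(N ⊔ Subgroup.zpowers g) + finrank K U < Nat.card G + finrank K V) :
    orderOf g * finrank K V ∣ Nat.card G := by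
  have := hI.nontrivial
  have := D.nontrivial_left
  rw [D.trace_eq] at hg
  have hW : Nat.card (G ⧸ N) + finrank K W < Nat.card G + finrank K V :=
    Nat.add_lt_add_of_lt_of_le (card_quotient_lt_card hN) <| by
      rw [D.finrank_eq]
      exact Nat.le_mul_of_pos_left _ finrank_pos
  have hright := hn.orderOf_mk_mul_finrank_dvd (D.isProjRep_right h)
    (D.isIrreducibleFamily_right (f := id) hI) (right_ne_zero_of_mul hg)
    (fun n hn => by
      rw [IsProjRep.mem_scalarKernel, D.right_eq_one n hn]
      exact Proportional.refl 1) hW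
  have hleft := hn _ _ _ ((D.isProjRep_left h).subgroup (N ⊔ Subgroup.zpowers g))
    (D.irreducible_left.of_forall_exists_proportional fun x =>
      ⟨⟨x, le_sup_left (a := N) x.2⟩, Proportional.refl _⟩)
    hU ⟨g, le_sup_right (a := N) (Subgroup.mem_zpowers g)⟩ (left_ne_zero_of_mul hg)
  rw [Subgroup.orderOf_mk, card_sup_zpowers] at hleft
  rw [N.card_eq_card_quotient_mul_card_subgroup, D.finrank_eq]
  refine Nat.dvd_of_mul_dvd_mul_left (orderOf_pos (g : G ⧸ N)) ?_
  calc orderOf (g : G ⧸ N) * (orderOf g * (finrank K U * finrank K W))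
      = orderOf g * finrank K U * (orderOf (g : G ⧸ N) * finrank K W) := by ring
    _ ∣ orderOf (g : G ⧸ N) * Nat.card N * Nat.card (G ⧸ N) := mul_dvd_mul hleft hright
    _ = orderOf (g : G ⧸ N) * (Nat.card (G ⧸ N) * Nat.card N) := by ring

variable [FiniteDimensional K V]

theorem dvd_of_scalarKernel_ne_bot (hn : WildeBelow.{u, v} K (Nat.card G + finrank K V))
    (h : IsProjRep T) (hI : IsIrreducibleFamily T) (hg : LinearMap.trace K V (T g) ≠ 0)
    (hker : h.scalarKernel ≠ ⊥) : orderOf g * finrank K V ∣ Nat.card G := by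
  have hquot := hn.orderOf_mk_mul_finrank_dvd h hI hg le_rfl
    (Nat.add_lt_add_right (card_quotient_lt_card hker) _)
  calc orderOf g * finrank K V
      ∣ orderOf (g : G ⧸ h.scalarKernel) * Nat.card h.scalarKernel * finrank K V :=
        mul_dvd_mul_right (orderOf_dvd_orderOf_mk_mul_card _ g) _
    _ = orderOf (g : G ⧸ h.scalarKernel) * finrank K V * Nat.card h.scalarKernel :=
        mul_right_comm _ _ _
    _ ∣ Nat.card (G ⧸ h.scalarKernel) * Nat.card h.scalarKernel := mul_dvd_mul_right hquot _
    _ = Nat.card G := h.scalarKernel.card_eq_card_quotient_mul_card_subgroup.symm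

theorem dvd_of_isImprimitivityBlock (hn : WildeBelow.{u, v} K (Nat.card G + finrank K V))
    (h : IsProjRep T) (hI : IsIrreducibleFamily T) (hg : LinearMap.trace K V (T g) ≠ 0)
    {Y : Submodule K V} (hY : IsImprimitivityBlock T Y) :
    orderOf g * finrank K V ∣ Nat.card G := by
  obtain ⟨x, hx, htrace⟩ := hY.exists_conj_trace_restrict_ne_zero h hI hg
  have hdvd := hn _ _ _ ((h.subgroup (h.stabilizer Y)).isProjRep_restrict
      fun y _ hv => h.apply_mem_of_mem_stabilizer y.2 hv)
    (hY.isIrreducibleFamily_stabilizer h hI)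
    (Nat.add_lt_add_of_lt_of_le (card_lt_card_of_ne_top (hY.stabilizer_ne_top h hI))
      (Submodule.finrank_le Y)) ⟨_, hx⟩ htrace
  rw [Subgroup.orderOf_mk, orderOf_inv_mul_mul_self] at hdvd
  rw [hY.finrank_eq h hI, mul_left_comm, ← (h.stabilizer Y).index_mul_card]
  exact mul_dvd_mul_left _ hdvd

theorem dvd_or_isIrreducibleFamily [IsAlgClosed K]
    (hn : WildeBelow.{u, v} K (Nat.card G + finrank K V))
    (h : IsProjRep T) (hI : IsIrreducibleFamily T) (hg : LinearMap.trace K V (T g) ≠ 0)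
    {N : Subgroup G} [N.Normal] (hN : N ≠ ⊥) :
    orderOf g * finrank K V ∣ Nat.card G ∨
      N ⊔ Subgroup.zpowers g = ⊤ ∧ IsIrreducibleFamily fun x : N => T x := by
  have := hI.nontrivial
  obtain ⟨U, k, ⟨D⟩⟩ | ⟨Y, hY⟩ := h.exists_cliffordSplitting_or_isImprimitivityBlock hI N
  · refine (lt_or_ge (Nat.card ↥(N ⊔ Subgroup.zpowers g) + finrank K U) _).imp
      (hn.dvd_of_cliffordSplitting h hI hg hN D) fun hge => ?_
    have hH := Subgroup.card_le_card_group (N ⊔ Subgroup.zpowers g)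
    have hU := Submodule.finrank_le U
    exact ⟨Subgroup.eq_top_of_card_eq _ (by lia),
      D.isIrreducibleFamily_of_finrank_eq (by lia)⟩
  · exact Or.inl (hn.dvd_of_isImprimitivityBlock h hI hg hY)

end WildeBelow

theorem orderOf_mul_finrank_dvd_card_of_isMulCommutative {K G V : Type*} [Field K]
    [IsAlgClosed K] [CharZero K] [Group G] [Finite G] [AddCommGroup V] [Module K V]
    [FiniteDimensional K V] {T : G → Module.End K V} (h : IsProjRep T)
    (hker : h.scalarKernel = ⊥) {N : Subgroup G} [N.Normal] [IsMulCommutative N]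
    (hI : IsIrreducibleFamily fun x : N => T x) {g : G} (hsup : N ⊔ Subgroup.zpowers g = ⊤) :
    orderOf g * finrank K V ∣ Nat.card G := by
  have hkerN := h.scalarKernel_subgroup_eq_bot hker N
  have hpow : ∀ x ∈ N, x ^ finrank K V = 1 := fun x hx => by
    have hmem := (h.subgroup N).pow_finrank_mem_scalarKernel hI ⟨x, hx⟩
    rw [hkerN, Subgroup.mem_bot] at hmem
    exact congrArg Subtype.val hmem
  have hcard := card_sup_zpowers N g
  rw [hsup, Subgroup.card_top, (h.subgroup N).card_eq_finrank_mul_finrank hI hkerN,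
    ← mul_assoc] at hcard
  rw [hcard]
  exact mul_dvd_mul_right (orderOf_dvd_orderOf_mk_mul hpow g) _

section SimpleFactors

variable {G : Type*} [Group G]

/-- `N` is a minimal normal subgroup of `G` with trivial centralizer and `S` is one of its simple
direct factors, encoded as a minimal nontrivial subgroup of `N` normalized by `N`. -/
structure IsSimpleFactor (N S : Subgroup G) : Prop where
  minimal_normal : Minimal (fun M : Subgroup G => M.Normal ∧ M ≠ ⊥) N
  minimal : Minimal (fun R => R ≤ N ∧ N ≤ Subgroup.normalizer (R : Set G) ∧ R ≠ ⊥) S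
  centralizer_eq_bot : Subgroup.centralizer (N : Set G) = ⊥

theorem centralizer_eq_bot_of_minimal {N : Subgroup G}
    (hN : Minimal (fun M : Subgroup G => M.Normal ∧ M ≠ ⊥) N) (hcomm : ¬ IsMulCommutative N)
    {g : G} (hsup : ∀ M : Subgroup G, M.Normal → M ≠ ⊥ → M ⊔ Subgroup.zpowers g = ⊤) :
    Subgroup.centralizer (N : Set G) = ⊥ := by
  have := hN.prop.1
  by_contra hne
  have hperfect : N ≤ ⁅N, N⁆ := hN.le_of_le
    ⟨inferInstance, mt Subgroup.commutator_self_eq_bot_iff.1 hcomm⟩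
    (Subgroup.commutator_le_left N N)
  have hcyclic : commutator G ≤ Subgroup.centralizer (N : Set G) :=
    Subgroup.Normal.commutator_le_of_self_sup_commutative_eq_top
      (hsup _ inferInstance hne) inferInstance
  exact hcomm <| Subgroup.le_centralizer_iff_isMulCommutative.1 <|
    hperfect.trans <| (Subgroup.commutator_mono le_top le_top).trans hcyclic

theorem exists_isSimpleFactor [Finite G] [Nontrivial G] {g : G}
    (hsup : ∀ M : Subgroup G, M.Normal → M ≠ ⊥ → M ⊔ Subgroup.zpowers g = ⊤)
    (hcomm : ∀ M : Subgroup G, M.Normal → M ≠ ⊥ → ¬ IsMulCommutative M) :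
    ∃ N S : Subgroup G, IsSimpleFactor N S := by
  obtain ⟨N, hN⟩ := (Set.toFinite {M : Subgroup G | M.Normal ∧ M ≠ ⊥}).exists_minimal
    ⟨⊤, inferInstance, top_ne_bot⟩
  obtain ⟨S, hS⟩ := (Set.toFinite
      {R : Subgroup G | R ≤ N ∧ N ≤ Subgroup.normalizer (R : Set G) ∧ R ≠ ⊥}).exists_minimal
    ⟨N, le_rfl, Subgroup.le_normalizer, hN.prop.2⟩
  exact ⟨N, S, hN, hS, centralizer_eq_bot_of_minimal hN (hcomm N hN.prop.1 hN.prop.2) hsup⟩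

namespace IsSimpleFactor

variable {N S : Subgroup G}

theorem normal (hS : IsSimpleFactor N S) : N.Normal := hS.minimal_normal.prop.1

theorem le (hS : IsSimpleFactor N S) : S ≤ N := hS.minimal.prop.1

theorem ne_bot (hS : IsSimpleFactor N S) : S ≠ ⊥ := hS.minimal.prop.2.2

theorem le_normalizer (hS : IsSimpleFactor N S) : N ≤ Subgroup.normalizer (S : Set G) :=
  hS.minimal.prop.2.1

theorem eq_bot_or_eq (hS : IsSimpleFactor N S) {R : Subgroup G} (hRS : R ≤ S)
    (hR : N ≤ Subgroup.normalizer (R : Set G)) : R = ⊥ ∨ R = S :=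
  or_iff_not_imp_left.2 fun hne => hS.minimal.eq_of_le ⟨hRS.trans hS.le, hR, hne⟩ hRS

theorem le_of_normal (hS : IsSimpleFactor N S) {M : Subgroup G} [M.Normal] (hM : S ≤ M) :
    N ≤ M := by
  have := hS.normal
  have hne : M ⊓ N ≠ ⊥ := fun h => hS.ne_bot (eq_bot_iff.2 (h ▸ le_inf hM hS.le))
  exact (hS.minimal_normal.le_of_le ⟨inferInstance, hne⟩ inf_le_right).trans inf_le_left

theorem conj_mem_centralizer [Finite G] (hS : IsSimpleFactor N S) {z s : G}
    (hz : z ∉ Subgroup.normalizer (S : Set G)) (hs : s ∈ S) :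
    z * s * z⁻¹ ∈ Subgroup.centralizer (S : Set G) := by
  have := hS.normal
  let Sz := S.map (MulAut.conj z : G →* G)
  have hconjN : N.map (MulAut.conj z : G →* G) = N := Subgroup.Normal.map_conj_eq N z
  have hSzN : Sz ≤ N := (Subgroup.map_mono hS.le).trans_eq hconjN
  have hSz : N ≤ Subgroup.normalizer (Sz : Set G) :=
    hconjN.ge.trans <| (Subgroup.map_mono hS.le_normalizer).trans (Subgroup.le_normalizer_map _)
  have hinf : S ⊓ Sz = ⊥ := by
    refine (hS.eq_bot_or_eq inf_le_left <| (le_inf hS.le_normalizer hSz).trans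
      Subgroup.inf_normalizer_le_normalizer_inf).resolve_right fun heq => hz ?_
    refine Subgroup.mem_normalizer_iff_map_conj_eq.2 (Subgroup.eq_of_le_of_card_ge ?_ ?_).symm
    · exact inf_eq_left.1 heq
    · exact (Nat.card_congr (S.equivMapOfInjective _ (MulAut.conj z).injective).toEquiv).ge
  have hcommutator : ⁅Sz, S⁆ = ⊥ := by
    rw [eq_bot_iff, ← hinf]
    refine le_inf ?_ ?_
    · exact Subgroup.le_normalizer_iff_commutator_le_right.1 (hSzN.trans hS.le_normalizer)
    · exact Subgroup.le_normalizer_iff_commutator_le_left.1 (hS.le.trans hSz)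
  exact Subgroup.commutator_eq_bot_iff_le_centralizer.1 hcommutator ⟨s, hs, rfl⟩

theorem le_sup_centralizer [Finite G] (hS : IsSimpleFactor N S) :
    N ≤ S ⊔ Subgroup.centralizer (S : Set G) := by
  refine (hS.le_of_normal Subgroup.le_normalClosure).trans <|
    (Subgroup.closure_le _).2 fun y hy => ?_
  obtain ⟨s, hs, hsy⟩ := Group.mem_conjugatesOfSet_iff.1 hy
  obtain ⟨z, rfl⟩ := isConj_iff.1 hsy
  by_cases hz : z ∈ Subgroup.normalizer (S : Set G)
  · exact Subgroup.mem_sup_left ((Subgroup.mem_normalizer_iff.1 hz s).1 hs)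
  · exact Subgroup.mem_sup_right (hS.conj_mem_centralizer hz hs)

theorem commutator_eq [Finite G] (hS : IsSimpleFactor N S) : ⁅S, S⁆ = S := by
  have hle : ⁅S, S⁆ ≤ S := Subgroup.le_normalizer_iff_commutator_le_right.1 Subgroup.le_normalizer
  have hinv : N ≤ Subgroup.normalizer (⁅S, S⁆ : Subgroup G) := by
    refine Subgroup.le_normalizer_iff.2 fun n hn s hs => ?_
    have hmap := Subgroup.mem_map_of_mem (MulAut.conj n : G →* G) hs
    rwa [Subgroup.map_commutator,
      Subgroup.mem_normalizer_iff_map_conj_eq.1 (hS.le_normalizer hn)] at hmap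
  refine (hS.eq_bot_or_eq hle hinv).resolve_left fun hbot => hS.ne_bot ?_
  have hself : S ≤ Subgroup.centralizer (S : Set G) :=
    Subgroup.commutator_eq_bot_iff_le_centralizer.1 hbot
  have hN : N ≤ Subgroup.centralizer (S : Set G) :=
    hS.le_sup_centralizer.trans (sup_le hself le_rfl)
  rw [eq_bot_iff, ← hS.centralizer_eq_bot]
  exact Subgroup.le_centralizer_iff.1 hN

theorem normalCore_centralizer_eq_bot (hS : IsSimpleFactor N S) :
    (Subgroup.centralizer (S : Set G)).normalCore = ⊥ := by
  have hle := hS.le_of_normal (Subgroup.le_centralizer_iff.1 (Subgroup.normalCore_le _))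
  rw [eq_bot_iff, ← hS.centralizer_eq_bot]
  exact Subgroup.le_centralizer_iff.1 hle

theorem pow_eq_one_of_mem_centralizer (hS : IsSimpleFactor N S) {g : G}
    (hsup : N ⊔ Subgroup.zpowers g = ⊤) {m : ℕ}
    (hm : g ^ m ∈ Subgroup.centralizer (S : Set G)) : g ^ m = 1 := by
  have := hS.normal
  suffices hcore : g ^ m ∈ (Subgroup.centralizer (S : Set G)).normalCore by
    rwa [hS.normalCore_centralizer_eq_bot, Subgroup.mem_bot] at hcore
  intro z
  obtain ⟨x, hx, _, ⟨k, rfl⟩, rfl⟩ :=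
    Subgroup.mem_sup_of_normal_left.1 (hsup ▸ Subgroup.mem_top z)
  have hfix : x * g ^ k * g ^ m * (x * g ^ k)⁻¹ = x * g ^ m * x⁻¹ := by group
  refine Subgroup.mem_centralizer_iff.2 fun s hs => ?_
  have hconj : x⁻¹ * s * x ∈ S := by
    simpa using (Subgroup.mem_normalizer_iff.1 (hS.le_normalizer (N.inv_mem hx)) s).1 hs
  have hcomm := Subgroup.mem_centralizer_iff.1 hm _ hconj
  change s * (x * g ^ k * g ^ m * (x * g ^ k)⁻¹) = x * g ^ k * g ^ m * (x * g ^ k)⁻¹ * s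
  rw [hfix]
  calc s * (x * g ^ m * x⁻¹) = x * (x⁻¹ * s * x * g ^ m) * x⁻¹ := by group
    _ = x * (g ^ m * (x⁻¹ * s * x)) * x⁻¹ := by rw [hcomm]
    _ = x * g ^ m * x⁻¹ * s := by group

end IsSimpleFactor

end SimpleFactors

section Perfect

variable {K V : Type*} [Field K] [AddCommGroup V] [Module K V]

theorem commute_of_mul_eq_smul {X A B C : Module.End K V} {α β : K} (hA : X * A = α • (A * X))
    (hB : X * B = β • (B * X)) (hBA : IsUnit (B * A)) (hC : C * (B * A) = A * B) :
    Commute X C := by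
  refine hBA.mul_right_cancel ?_
  have hXBA : X * (B * A) = (α * β) • (B * A * X) := by
    rw [← mul_assoc, hB, smul_mul_assoc, mul_assoc, hA, mul_smul_comm, smul_smul, mul_comm β,
      mul_assoc]
  calc X * C * (B * A) = X * A * B := by rw [mul_assoc, hC, mul_assoc]
    _ = (α * β) • (A * B * X) := by
      rw [hA, smul_mul_assoc, mul_assoc, hB, mul_smul_comm, smul_smul, mul_assoc]
    _ = C * X * (B * A) := by rw [mul_assoc C X, hXBA, mul_smul_comm, ← hC, mul_assoc C]

namespace IsProjRep

variable {G : Type*} [Group G] {T : G → Module.End K V}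

/-- The subgroup of elements whose operators commute with `X`. -/
def commutingSubgroup (h : IsProjRep T) (X : Module.End K V) : Subgroup G where
  carrier := {s | Commute X (T s)}
  one_mem' := by
    obtain ⟨c, -, hc⟩ := h.map_one
    change Commute X (T 1)
    exact hc ▸ (Commute.one_right X).smul_right c
  mul_mem' := fun {a b} ha hb => by
    obtain ⟨c, -, hc⟩ := h.map_mul a b
    change Commute X (T (a * b))
    exact hc ▸ (ha.mul_right hb).smul_right c
  inv_mem' := fun {a} ha => by
    obtain ⟨c, -, hc⟩ := h.mul_map_inv a
    have hcomm : Commute X (T a * T a⁻¹) := hc ▸ (Commute.one_right X).smul_right c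
    refine (h.isUnit a).mul_left_cancel ?_
    rw [← mul_assoc, ← ha.eq, mul_assoc, hcomm.eq, mul_assoc]

theorem commute_of_le_commutator (h : IsProjRep T) {S : Subgroup G} (hS : S ≤ ⁅S, S⁆) {x : G}
    (hx : x ∈ Subgroup.centralizer (S : Set G)) {s : G} (hs : s ∈ S) : Commute (T x) (T s) := by
  suffices hle : ⁅S, S⁆ ≤ h.commutingSubgroup (T x) from hle (hS hs)
  have hcomm {s : G} (hs : s ∈ S) : T x * T s ∝ T s * T x := by
    refine (h.map_mul x s).symm.trans ?_
    rw [← Subgroup.mem_centralizer_iff.1 hx s hs]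
    exact h.map_mul s x
  refine Subgroup.commutator_le.2 fun s hs t ht => ?_
  obtain ⟨α, -, hα⟩ := hcomm hs
  obtain ⟨β, -, hβ⟩ := hcomm ht
  have hst : T s * T t ∝ T ⁅s, t⁆ * (T t * T s) := by
    refine (h.map_mul s t).symm.trans ?_
    have heq : s * t = ⁅s, t⁆ * (t * s) := by rw [commutatorElement_def]; group
    rw [heq]
    exact (h.map_mul _ _).trans ((Proportional.refl _).mul (h.map_mul t s))
  obtain ⟨c, hc, hst⟩ := hst
  have hsmul : Commute (T x) (c • T ⁅s, t⁆) :=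
    commute_of_mul_eq_smul hα hβ ((h.isUnit t).mul (h.isUnit s)) (by rw [smul_mul_assoc, hst])
  exact (Commute.smul_right_iff₀ hc).1 hsmul

end IsProjRep

end Perfect

section ConjugateTensorFactors

variable {K U V : Type*} [Field K] [AddCommGroup U] [Module K U] [FiniteDimensional K U]
  [AddCommGroup V] [Module K V]

theorem trace_mul_mul_toConjAct_smul (τ : (Module.End K V)ˣ) (a b : Module.End K V) :
    LinearMap.trace K V (τ * (b * ConjAct.toConjAct τ • a)) =
      LinearMap.trace K V (τ * (a * b)) := by
  rw [← mul_assoc, LinearMap.trace_mul_comm, ConjAct.units_smul_def, ConjAct.ofConjAct_toConjAct]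
  simp only [mul_assoc, Units.inv_mul_cancel_left]

/-- The trace of a tensor-induced operator is the trace of the first return to a tensor factor:
if conjugation by `τ` permutes `t` commuting copies of `End U` cyclically, starting from
`j : End U → End V`, and its `t`-th power acts on the first copy as conjugation by `R`, then
`x ↦ tr (τ * j (x * R⁻¹))` is a trace function on `End U`. -/
theorem trace_ne_zero_of_toConjAct_pow_smul (j : Module.End K U →ₐ[K] Module.End K V)
    (τ : (Module.End K V)ˣ) (R : (Module.End K U)ˣ) {t : ℕ} (ht : 0 < t)
    (hcomm : ∀ i, 0 < i → i < t → ∀ x y, Commute (ConjAct.toConjAct τ ^ i • j x) (j y))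
    (hR : ∀ x, ConjAct.toConjAct τ ^ t • j x = j (R * x * ↑R⁻¹))
    (hτ : LinearMap.trace K V τ ≠ 0) : LinearMap.trace K U R ≠ 0 := by
  have hstep (i : ℕ) (hi : 1 ≤ i) : i ≤ t → ∀ x y,
      LinearMap.trace K V (τ * (j y * ConjAct.toConjAct τ ^ i • j x)) =
        LinearMap.trace K V (τ * j (x * y)) := by
    induction i, hi using Nat.le_induction with
    | base => intro _ x y; rw [pow_one, trace_mul_mul_toConjAct_smul, map_mul j]
    | succ i hi ih =>
      intro hit x y
      rw [pow_succ', mul_smul, trace_mul_mul_toConjAct_smul, (hcomm i hi hit x y).eq,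
        ih (by lia)]
  let ψ : Module.End K U →ₗ[K] K := LinearMap.trace K V ∘ₗ LinearMap.mulLeft K ↑τ ∘ₗ
    j.toLinearMap ∘ₗ LinearMap.mulRight K ↑R⁻¹
  have hψ (x : Module.End K U) : ψ x = LinearMap.trace K V (τ * j (x * ↑R⁻¹)) := rfl
  obtain ⟨c, hc⟩ := exists_eq_smul_trace_of_mul_comm ψ fun x y => by
    rw [hψ, hψ, mul_assoc, ← hstep t ht le_rfl, hR, ← map_mul]
    simp only [mul_assoc, Units.inv_mul_cancel_left]
  have hψR := hψ R
  rw [Units.mul_inv, map_one, mul_one, hc] at hψR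
  exact right_ne_zero_of_mul (hψR ▸ hτ)

end ConjugateTensorFactors

theorem IsProjRep.toConjAct_pow_smul_proportional {K G V : Type*} [Field K] [Group G]
    [AddCommGroup V] [Module K V] {T : G → Module.End K V} (h : IsProjRep T) (g s : G) (i : ℕ) :
    ConjAct.toConjAct (h.isUnit g).unit ^ i • T s ∝ T (g ^ i * s * (g ^ i)⁻¹) := by
  set τ := (h.isUnit g).unit ^ i
  have hτ : (τ : Module.End K V) ∝ T (g ^ i) := by
    rw [Units.val_pow_eq_pow_val]
    exact (h.map_pow g i).symm
  have hmul : (τ : Module.End K V) * T s ∝ T (g ^ i * s * (g ^ i)⁻¹) * (τ : Module.End K V) :=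
    (hτ.mul (.refl _)).trans ((h.mul_map _ _).trans (Proportional.mul (.refl _) hτ.symm))
  rw [← _root_.map_pow, ConjAct.units_smul_def, ConjAct.ofConjAct_toConjAct]
  simpa only [mul_assoc, Units.mul_inv, mul_one] using
    hmul.mul (.refl (↑τ⁻¹ : Module.End K V))

namespace CliffordSplitting

variable {K G V U W : Type*} [Field K] [Group G] [AddCommGroup V] [Module K V]
  [AddCommGroup U] [Module K U] [AddCommGroup W] [Module K W] {T : G → Module.End K V}
  {N : Subgroup G}

/-- The algebra `End U` acting on `V ≅ U ⊗ W` through the left tensor factor. -/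
noncomputable def leftAlgHom (D : CliffordSplitting T N U W) :
    Module.End K U →ₐ[K] Module.End K V :=
  (D.equiv.conjAlgEquiv K).toAlgHom.comp (Module.End.rTensorAlgHom K U W)

theorem leftAlgHom_tmul (D : CliffordSplitting T N U W) (x : Module.End K U) (u : U) (w : W) :
    D.leftAlgHom x (D.equiv (u ⊗ₜ w)) = D.equiv (x u ⊗ₜ w) := by
  change D.equiv (x.rTensor W (D.equiv.symm (D.equiv (u ⊗ₜ w)))) = _
  rw [D.equiv.symm_apply_apply, LinearMap.rTensor_tmul]

theorem leftAlgHom_left (D : CliffordSplitting T N U W) {n : G} (hn : n ∈ N) :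
    D.leftAlgHom (D.left n) = T n := D.ext_tmul fun u w => by
  rw [leftAlgHom_tmul, D.map_tmul, D.right_eq_one n hn, Module.End.one_apply]

theorem mul_leftAlgHom (D : CliffordSplitting T N U W) {g : G} {x y : Module.End K U}
    (hxy : D.left g * x = y * D.left g) : T g * D.leftAlgHom x = D.leftAlgHom y * T g :=
  D.ext_tmul fun u w => by
    rw [Module.End.mul_apply, Module.End.mul_apply, leftAlgHom_tmul, D.map_tmul, D.map_tmul,
      leftAlgHom_tmul, ← Module.End.mul_apply, hxy, Module.End.mul_apply]

theorem commute_toConjAct_smul_leftAlgHom [IsAlgClosed K] [FiniteDimensional K U]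
    (D : CliffordSplitting T N U W) (φ : ConjAct (Module.End K V)ˣ)
    (hφ : ∀ n ∈ N, ∀ n' ∈ N, Commute (φ • T n) (T n')) (x y : Module.End K U) :
    Commute (φ • D.leftAlgHom x) (D.leftAlgHom y) := by
  refine (D.irreducible_left.commute_of_forall_commute
    ((MulSemiringAction.toAlgHom K _ φ).comp D.leftAlgHom) (fun n => ?_) x).symm
  refine (D.irreducible_left.commute_of_forall_commute D.leftAlgHom (fun n' => ?_) y).symm
  rw [D.leftAlgHom_left n'.2]
  change Commute (φ • D.leftAlgHom (D.left n)) (T n')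
  rw [D.leftAlgHom_left n.2]
  exact hφ n n.2 n' n'.2

theorem trace_left_pow_ne_zero [IsAlgClosed K] [FiniteDimensional K U] [Nontrivial V]
    {S H : Subgroup G} (h : IsProjRep T) (hS : S ≤ ⁅S, S⁆)
    (D : CliffordSplitting (fun x : H => T x) (S.subgroupOf H) U W)
    (hconj : ∀ z ∉ H, ∀ s ∈ S, z * s * z⁻¹ ∈ Subgroup.centralizer (S : Set G)) {g : G} {t : ℕ}
    (ht : 0 < t) (hgt : g ^ t ∈ H) (hlt : ∀ i, 0 < i → i < t → g ^ i ∉ H)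
    (hg : LinearMap.trace K V (T g) ≠ 0) :
    LinearMap.trace K U (D.left ⟨g ^ t, hgt⟩) ≠ 0 := by
  have hunit := (D.isProjRep_left (h.subgroup H)).isUnit ⟨g ^ t, hgt⟩
  refine trace_ne_zero_of_toConjAct_pow_smul D.leftAlgHom (h.isUnit g).unit hunit.unit ht
    (fun i hi hit => D.commute_toConjAct_smul_leftAlgHom _ fun s hs s' hs' => ?_)
    (fun x => ?_) hg
  · obtain ⟨c, -, hc⟩ := h.toConjAct_pow_smul_proportional g s i
    rw [hc]
    exact (h.commute_of_le_commutator hS (hconj _ (hlt i hi hit) s hs) hs').smul_left c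
  · obtain ⟨c, -, hpow⟩ := (h.map_pow g t).symm
    have hmul := D.mul_leftAlgHom (g := ⟨g ^ t, hgt⟩) (x := x)
      (y := hunit.unit * x * ↑hunit.unit⁻¹) (by
        rw [mul_assoc, IsUnit.val_inv_mul, mul_one, IsUnit.unit_spec])
    rw [← _root_.map_pow, ConjAct.units_smul_def, ConjAct.ofConjAct_toConjAct,
      Units.mul_inv_eq_iff_eq_mul, Units.val_pow_eq_pow_val, IsUnit.unit_spec, hpow,
      smul_mul_assoc, mul_smul_comm, hmul]

end CliffordSplitting

section CentralProduct

variable {K G V : Type*} [Field K] [Group G] [AddCommGroup V] [Module K V]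
  {T : G → Module.End K V} {M N : Subgroup G}

theorem apply_mem_isotypicComponent_of_commute {A : Module.End K V}
    (hA : ∀ n ∈ N, Commute A (T n)) (U : Submodule (operatorAlgebra T N) V)
    [IsSimpleModule (operatorAlgebra T N) U] {v : V}
    (hv : v ∈ isotypicComponent (operatorAlgebra T N) V U) :
    A v ∈ isotypicComponent (operatorAlgebra T N) V U := by
  let f : Module.End (operatorAlgebra T N) V :=
    { A with
      map_smul' := fun a w => by
        have hcomm : Commute A (a : Module.End K V) := by
          refine Algebra.commute_of_mem_adjoin_of_forall_mem_commute a.2 ?_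
          rintro _ ⟨n, hn, rfl⟩
          exact hA n hn
        exact LinearMap.congr_fun hcomm.eq w }
  exact Submodule.IsFullyInvariant.isotypicComponent (operatorAlgebra T N) V U f hv

theorem IsProjRep.exists_cliffordSplitting_of_le_sup_centralizer [IsAlgClosed K]
    [FiniteDimensional K V] (h : IsProjRep T) [N.Normal] (hN : N ≤ ⁅N, N⁆)
    (hM : M ≤ N ⊔ Subgroup.centralizer (N : Set G))
    (hI : IsIrreducibleFamily fun x : M => T x) :
    ∃ (U : Submodule K V) (k : ℕ), Nonempty (CliffordSplitting T N U (Fin k → K)) := by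
  have hIG : IsIrreducibleFamily T := hI.of_forall_exists_proportional fun x => ⟨x, .refl _⟩
  have := hI.nontrivial
  have := h.isSemisimpleModule hIG (N := N)
  obtain ⟨U, hU⟩ := IsSemisimpleModule.exists_simple_submodule (operatorAlgebra T N) V
  have htop : isotypicComponent (operatorAlgebra T N) V U = ⊤ := by
    rw [← Submodule.restrictScalars_eq_top_iff K]
    refine (hI.eq_bot_or_eq_top _ fun x v hv => ?_).resolve_left ?_
    · obtain ⟨n, hn, c, hc, hx⟩ := Subgroup.mem_sup_of_normal_left.1 (hM x.2)
      rw [← hx]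
      refine (h.map_mul n c).apply_mem ?_
      have hcv := apply_mem_isotypicComponent_of_commute
        (fun _ hm => h.commute_of_le_commutator hN hc hm) U hv
      exact Submodule.smul_mem _ (⟨T n, mem_operatorAlgebra hn⟩ : operatorAlgebra T N) hcv
    · rw [Submodule.restrictScalars_eq_bot_iff]
      exact (bot_lt_isotypicComponent U).ne'
  exact ⟨_, h.exists_cliffordSplitting_of_isIsotypicOfType hIG (.of_isotypicComponent_eq_top htop)⟩

namespace CliffordSplitting

variable {U W : Type*} [AddCommGroup U] [Module K U] [AddCommGroup W] [Module K W] [Nontrivial V]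
  [N.Normal]

theorem scalarKernel_left_eq_centralizer [IsAlgClosed K] [FiniteDimensional K U]
    (D : CliffordSplitting T N U W) (h : IsProjRep T) (hker : h.scalarKernel = ⊥)
    (hN : N ≤ ⁅N, N⁆) :
    (D.isProjRep_left h).scalarKernel = Subgroup.centralizer (N : Set G) := by
  refine le_antisymm (fun k hk => ?_) fun k hk => ?_
  · have hdisjoint : Disjoint (D.isProjRep_left h).scalarKernel N := by
      rw [disjoint_iff, eq_bot_iff, ← hker]
      rintro x ⟨hx, hxN⟩
      obtain ⟨c, hc, hleft⟩ := (IsProjRep.mem_scalarKernel _).1 hx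
      refine h.mem_scalarKernel.2 ⟨c, hc, ?_⟩
      rw [← D.leftAlgHom_left hxN, hleft, map_smul, map_one]
    exact Subgroup.mem_centralizer_iff.2 fun n hn =>
      (Subgroup.commute_of_normal_of_disjoint _ _ inferInstance ‹_› hdisjoint k n hk hn).symm
  · exact (D.isProjRep_left h).mem_scalarKernel_of_forall_commute D.irreducible_left fun n =>
      (D.isProjRep_left h).commute_of_le_commutator hN hk n.2

theorem isIrreducibleFamily_right_of_le_sup [FiniteDimensional K W]
    (D : CliffordSplitting T N U W) (h : IsProjRep T) {C : Subgroup G} (hM : M ≤ N ⊔ C)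
    (hI : IsIrreducibleFamily fun x : M => T x) :
    IsIrreducibleFamily fun c : C => D.right c := by
  refine (D.isIrreducibleFamily_right (f := Subtype.val) hI).of_forall_exists_proportional
    fun x => ?_
  obtain ⟨n, hn, c, hc, hx⟩ := Subgroup.mem_sup_of_normal_left.1 (hM x.2)
  refine ⟨⟨c, hc⟩, ?_⟩
  have hmul := (D.isProjRep_right h).map_mul n c
  rwa [D.right_eq_one n hn, one_mul, hx] at hmul

end CliffordSplitting

end CentralProduct

section SubgroupOf

variable {G : Type*} [Group G] {S H : Subgroup G}

theorem centralizer_subgroupOf (hSH : S ≤ H) :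
    (Subgroup.centralizer (S : Set G)).subgroupOf H =
      Subgroup.centralizer (S.subgroupOf H : Set H) := by
  ext x
  simp only [Subgroup.mem_subgroupOf, Subgroup.mem_centralizer_iff, SetLike.mem_coe]
  exact ⟨fun hx y hy => Subtype.ext (hx y hy),
    fun hx y hy => congrArg Subtype.val (hx ⟨y, hSH hy⟩ hy)⟩

theorem commutator_subgroupOf (hSH : S ≤ H) :
    ⁅S.subgroupOf H, S.subgroupOf H⁆ = ⁅S, S⁆.subgroupOf H := by
  apply Subgroup.map_injective H.subtype_injective
  rw [Subgroup.map_commutator, Subgroup.map_subgroupOf_eq_of_le hSH,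
    Subgroup.map_subgroupOf_eq_of_le ((Subgroup.commutator_le_self S).trans hSH)]

end SubgroupOf

namespace IsSimpleFactor

variable {G : Type*} [Group G] {N S : Subgroup G}

theorem subgroupOf_normalizer_le_sup [Finite G] (hS : IsSimpleFactor N S) :
    N.subgroupOf (Subgroup.normalizer (S : Set G)) ≤
      S.subgroupOf (Subgroup.normalizer (S : Set G)) ⊔
        Subgroup.centralizer (S.subgroupOf (Subgroup.normalizer (S : Set G)) : Set _) := by
  rw [← centralizer_subgroupOf Subgroup.le_normalizer,
    ← Subgroup.subgroupOf_sup Subgroup.le_normalizer (Subgroup.centralizer_le_normalizer _)]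
  exact Subgroup.comap_mono hS.le_sup_centralizer

theorem orderOf_dvd_mul_orderOf_mk (hS : IsSimpleFactor N S) {g : G}
    (hsup : N ⊔ Subgroup.zpowers g = ⊤) {H : Subgroup G} (hSH : S ≤ H)
    [(S.subgroupOf H).Normal] {x : H} {i : ℕ} (hx : (x : G) = g ^ i) :
    orderOf g ∣ i * orderOf (x : H ⧸ Subgroup.centralizer (S.subgroupOf H : Set H)) := by
  have hmem := (centralizer_subgroupOf hSH).ge (pow_orderOf_mk_mem _ x)
  refine orderOf_dvd_of_pow_eq_one (hS.pow_eq_one_of_mem_centralizer hsup ?_)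
  rw [pow_mul, ← hx]
  exact hmem

end IsSimpleFactor

theorem minimalPeriod_smul_eq_card {G X : Type*} [Group G] [MulAction G X] [Finite X] {g : G}
    {b : X} (hb : MulAction.orbit (Subgroup.zpowers g) b = Set.univ) :
    Function.minimalPeriod (g • ·) b = Nat.card X := by
  let _ := Fintype.ofFinite (MulAction.orbit (Subgroup.zpowers g) b)
  rw [MulAction.minimalPeriod_eq_card, ← Nat.card_eq_fintype_card, hb, Nat.card_univ]

theorem pow_mem_iff_index_dvd {G : Type*} [Group G] [Finite G] {N H : Subgroup G} [N.Normal]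
    (hNH : N ≤ H) {g : G} (hsup : N ⊔ Subgroup.zpowers g = ⊤) {i : ℕ} :
    g ^ i ∈ H ↔ H.index ∣ i := by
  have hperiod : Function.minimalPeriod (g • ·) ((1 : G) : G ⧸ H) = H.index := by
    refine minimalPeriod_smul_eq_card (Set.eq_univ_of_forall fun q => ?_)
    obtain ⟨x, rfl⟩ := QuotientGroup.mk_surjective q
    obtain ⟨y, hy, n, hn, rfl⟩ := Subgroup.mem_sup_of_normal_right.1
      (sup_comm N _ ▸ hsup ▸ Subgroup.mem_top x)
    refine ⟨⟨y, hy⟩, QuotientGroup.eq.2 ?_⟩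
    simpa using hNH hn
  rw [← hperiod, ← MulAction.pow_smul_eq_iff_minimalPeriod_dvd, MulAction.Quotient.smul_coe,
    smul_eq_mul, mul_one, eq_comm, QuotientGroup.eq, inv_one, one_mul]

namespace WildeBelow

variable {K : Type u} [Field K] [IsAlgClosed K] {G : Type v} [Group G] [Finite G] {V : Type u}
  [AddCommGroup V] [Module K V] {T : G → Module.End K V} {g : G} {M N S : Subgroup G}

theorem orderOf_mk_centralizer_mul_finrank_dvd [CharZero K] {n : ℕ} (hn : WildeBelow.{u, v} K n)
    (h : IsProjRep T) (hcard : Nat.card G + finrank K V < n) (hker : h.scalarKernel = ⊥)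
    [N.Normal] (hN : N ≤ ⁅N, N⁆) (hM : M ≤ N ⊔ Subgroup.centralizer (N : Set G))
    (hI : IsIrreducibleFamily fun x : M => T x) {U W : Type u} [AddCommGroup U] [Module K U]
    [FiniteDimensional K U] [AddCommGroup W] [Module K W] [FiniteDimensional K W]
    (D : CliffordSplitting T N U W) (hg : LinearMap.trace K U (D.left g) ≠ 0) :
    orderOf (g : G ⧸ Subgroup.centralizer (N : Set G)) * finrank K V ∣ Nat.card G := by
  have := hI.nontrivial
  have := D.nontrivial_left
  have := D.nontrivial_right
  have hU : finrank K U ≤ finrank K V := by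
    rw [D.finrank_eq]; exact Nat.le_mul_of_pos_right _ finrank_pos
  have hW : finrank K W ≤ finrank K V := by
    rw [D.finrank_eq]; exact Nat.le_mul_of_pos_left _ finrank_pos
  have hquot : Nat.card (G ⧸ Subgroup.centralizer (N : Set G)) ≤ Nat.card G :=
    Nat.card_le_card_of_surjective _ QuotientGroup.mk_surjective
  have hleft := hn.orderOf_mk_mul_finrank_dvd (D.isProjRep_left h)
    (D.irreducible_left.of_forall_exists_proportional fun x => ⟨x, .refl _⟩) hg
    (D.scalarKernel_left_eq_centralizer h hker hN).ge (by lia)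
  have hcent := Subgroup.card_le_card_group (Subgroup.centralizer (N : Set G))
  have hright := hn _ _ _ ((D.isProjRep_right h).subgroup (Subgroup.centralizer (N : Set G)))
    (D.isIrreducibleFamily_right_of_le_sup h hM hI) (by lia) 1
    ((D.isProjRep_right h).map_one.symm.trace_ne_zero (by
      rw [LinearMap.trace_one]
      exact Nat.cast_ne_zero.2 finrank_pos.ne'))
  rw [orderOf_one, one_mul] at hright
  rw [D.finrank_eq, ← mul_assoc,
    (Subgroup.centralizer (N : Set G)).card_eq_card_quotient_mul_card_subgroup]
  exact mul_dvd_mul hleft hright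

theorem dvd_of_normalizer_ne_top [CharZero K] [FiniteDimensional K V]
    (hn : WildeBelow.{u, v} K (Nat.card G + finrank K V)) (h : IsProjRep T)
    (hker : h.scalarKernel = ⊥) (hg : LinearMap.trace K V (T g) ≠ 0) (hS : IsSimpleFactor N S)
    (hI : IsIrreducibleFamily fun x : N => T x) (hsup : N ⊔ Subgroup.zpowers g = ⊤)
    (hne : Subgroup.normalizer (S : Set G) ≠ ⊤) : orderOf g * finrank K V ∣ Nat.card G := by
  have := hI.nontrivial
  have := hS.normal
  set H := Subgroup.normalizer (S : Set G)
  have hnormal : (S.subgroupOf H).Normal := Subgroup.normal_in_normalizer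
  have hperfect : S.subgroupOf H ≤ ⁅S.subgroupOf H, S.subgroupOf H⁆ := by
    rw [commutator_subgroupOf Subgroup.le_normalizer, hS.commutator_eq]
  have hIH : IsIrreducibleFamily fun x : N.subgroupOf H => T x.1 :=
    hI.of_forall_exists_proportional fun x => ⟨⟨⟨x, hS.le_normalizer x.2⟩, x.2⟩, .refl _⟩
  obtain ⟨U, k, ⟨D⟩⟩ := (h.subgroup H).exists_cliffordSplitting_of_le_sup_centralizer hperfect
    hS.subgroupOf_normalizer_le_sup hIH
  have hpow {i : ℕ} : g ^ i ∈ H ↔ H.index ∣ i := pow_mem_iff_index_dvd hS.le_normalizer hsup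
  have hmem : g ^ H.index ∈ H := hpow.2 dvd_rfl
  have htrace := D.trace_left_pow_ne_zero h hS.commutator_eq.ge
    (fun z hz s hs => hS.conj_mem_centralizer hz hs)
    (Nat.pos_of_ne_zero H.index_ne_zero_of_finite) hmem
    (fun i hi hit hgi => hit.not_ge (Nat.le_of_dvd hi (hpow.1 hgi))) hg
  have hdvd := hn.orderOf_mk_centralizer_mul_finrank_dvd (h.subgroup H)
    (Nat.add_lt_add_right (card_lt_card_of_ne_top hne) _) (h.scalarKernel_subgroup_eq_bot hker H)
    hperfect hS.subgroupOf_normalizer_le_sup hIH D htrace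
  rw [← H.index_mul_card]
  have horder := hS.orderOf_dvd_mul_orderOf_mk hsup Subgroup.le_normalizer (x := ⟨_, hmem⟩) rfl
  refine (mul_dvd_mul_right horder _).trans ?_
  rw [mul_assoc]
  exact mul_dvd_mul_left _ hdvd

end WildeBelow

section CentralExtensions

variable {Γ G : Type*} [Group Γ] [Group G]

theorem commutatorElement_mul_mul_of_mem_center {x y z w : Γ} (hz : z ∈ Subgroup.center Γ)
    (hw : w ∈ Subgroup.center Γ) : ⁅x * z, y * w⁆ = ⁅x, y⁆ := by
  have hzy : y * w * z = z * (y * w) := Subgroup.mem_center_iff.1 hz (y * w)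
  have hwx : x⁻¹ * w = w * x⁻¹ := Subgroup.mem_center_iff.1 hw x⁻¹
  calc ⁅x * z, y * w⁆ = x * (z * (y * w)) * z⁻¹ * x⁻¹ * w⁻¹ * y⁻¹ := by
        rw [commutatorElement_def]; group
    _ = x * y * (w * x⁻¹) * w⁻¹ * y⁻¹ := by rw [← hzy]; group
    _ = ⁅x, y⁆ := by rw [← hwx, commutatorElement_def]; group

theorem finite_commutatorSet [(Subgroup.center Γ).FiniteIndex] : Finite (commutatorSet Γ) := by
  refine ((Set.finite_range fun p : (Γ ⧸ Subgroup.center Γ) × (Γ ⧸ Subgroup.center Γ) =>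
    ⁅p.1.out, p.2.out⁆).subset ?_).to_subtype
  rintro _ ⟨x, y, rfl⟩
  refine ⟨(x, y), ?_⟩
  obtain ⟨z, hz⟩ := QuotientGroup.mk_out_eq_mul (Subgroup.center Γ) x
  obtain ⟨w, hw⟩ := QuotientGroup.mk_out_eq_mul (Subgroup.center Γ) y
  simp only [hz, hw]
  exact commutatorElement_mul_mul_of_mem_center z.2 w.2

theorem commutator_commutator_eq {M : Subgroup Γ} (hM : M ≤ ⁅M, M⁆ ⊔ Subgroup.center Γ) :
    ⁅⁅M, M⁆, ⁅M, M⁆⁆ = ⁅M, M⁆ := by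
  refine le_antisymm (Subgroup.commutator_le_self _) (Subgroup.commutator_le.2 fun x hx y hy => ?_)
  obtain ⟨a, ha, z, hz, rfl⟩ := Subgroup.mem_sup_of_normal_right.1 (hM hx)
  obtain ⟨b, hb, w, hw, rfl⟩ := Subgroup.mem_sup_of_normal_right.1 (hM hy)
  rw [commutatorElement_mul_mul_of_mem_center hz hw]
  exact Subgroup.commutator_mem_commutator ha hb

theorem exists_map_eq_and_pow_mem {π : Γ →* G} (hπ : Function.Surjective π)
    (hcenter : π.ker ≤ Subgroup.center Γ) {m : ℕ} (hdiv : ∀ z ∈ π.ker, ∃ w ∈ π.ker, w ^ m = z)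
    {L : Subgroup Γ} {g : G} (hg : g ^ m ∈ L.map π) : ∃ h, π h = g ∧ h ^ m ∈ L := by
  obtain ⟨x, rfl⟩ := hπ g
  obtain ⟨l, hl, hlx⟩ := hg
  have hker : (x ^ m)⁻¹ * l ∈ π.ker := by
    rw [MonoidHom.mem_ker, map_mul, map_inv, hlx, map_pow, inv_mul_cancel]
  obtain ⟨w, hw, hwm⟩ := hdiv _ hker
  refine ⟨x * w, by rw [map_mul, MonoidHom.mem_ker.1 hw, mul_one], ?_⟩
  have hcomm : Commute x w := Subgroup.mem_center_iff.1 (hcenter hw) x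
  rwa [hcomm.mul_pow, hwm, mul_inv_cancel_left]

theorem finite_sup_zpowers {L : Subgroup Γ} [L.Normal] [Finite L] {h : Γ} {m : ℕ} (hm : m ≠ 0)
    (hh : h ^ m ∈ L) : Finite (L ⊔ Subgroup.zpowers h : Subgroup Γ) := by
  have hpow : IsOfFinOrder (h ^ m) := L.subtype.isOfFinOrder (isOfFinOrder_of_finite ⟨h ^ m, hh⟩)
  have hzpowers := ((isOfFinOrder_pow.1 hpow).resolve_right hm).finite_zpowers
  refine Set.Finite.to_subtype ?_
  rw [Subgroup.normal_mul]
  exact (Set.toFinite (L : Set Γ)).mul hzpowers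

theorem mem_of_mem_sup_zpowers {π : Γ →* G} {L : Subgroup Γ} [L.Normal] [(L.map π).Normal]
    {h : Γ} (hh : h ^ orderOf (π h : G ⧸ L.map π) ∈ L) {x : Γ}
    (hx : x ∈ L ⊔ Subgroup.zpowers h) (hπx : x ∈ π.ker) : x ∈ L := by
  obtain ⟨l, hl, _, ⟨k, rfl⟩, rfl⟩ := Subgroup.mem_sup_of_normal_left.1 hx
  have hk : π h ^ k ∈ L.map π := by
    rw [MonoidHom.mem_ker, map_mul, map_zpow, mul_eq_one_iff_eq_inv] at hπx
    rw [← inv_mem_iff, ← hπx]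
    exact Subgroup.mem_map_of_mem π hl
  rw [← QuotientGroup.eq_one_iff, QuotientGroup.mk_zpow, ← orderOf_dvd_iff_zpow_eq_one] at hk
  obtain ⟨j, rfl⟩ := hk
  refine mul_mem hl ?_
  simpa only [zpow_mul, zpow_natCast] using zpow_mem hh j

end CentralExtensions

section NearlySimple

variable {H G : Type*} [Group H] [Group G]

/-- The purely group-theoretic part of condition `(*)`. -/
structure IsNearlySimple (H : Type*) [Group H] (h : H) : Prop where
  isQuasisimple : IsQuasisimple (commutator H)
  map_center : (Subgroup.center (commutator H)).map (commutator H).subtype = Subgroup.center H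
  isCyclic_center : IsCyclic (Subgroup.center H)
  sup_zpowers : commutator H ⊔ Subgroup.zpowers h = ⊤

variable {π : H →* G} {L : Subgroup H}

theorem centralizer_le_ker (hL : Subgroup.centralizer (L.map π : Set G) = ⊥) :
    Subgroup.centralizer (L : Set H) ≤ π.ker := by
  intro x hx
  rw [MonoidHom.mem_ker, ← Subgroup.mem_bot, ← hL, Subgroup.mem_centralizer_iff]
  rintro _ ⟨l, hl, rfl⟩
  rw [← map_mul, Subgroup.mem_centralizer_iff.1 hx l hl, map_mul]

theorem center_eq_ker (hL : Subgroup.centralizer (L.map π : Set G) = ⊥)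
    (hcenter : π.ker ≤ Subgroup.center H) : Subgroup.center H = π.ker :=
  ((Subgroup.center_le_centralizer _).trans (centralizer_le_ker hL)).antisymm hcenter

theorem map_subtype_center_eq_ker (hL : Subgroup.centralizer (L.map π : Set G) = ⊥)
    (hcenter : π.ker ≤ Subgroup.center H) (hker : π.ker ≤ L) :
    (Subgroup.center L).map L.subtype = π.ker := by
  refine le_antisymm ?_ fun x hx => ⟨⟨x, hker hx⟩, ?_, rfl⟩
  · rintro _ ⟨x, hx, rfl⟩
    exact centralizer_le_ker hL <| Subgroup.mem_centralizer_iff.2 fun l hl =>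
      congrArg Subtype.val (Subgroup.mem_center_iff.1 hx ⟨l, hl⟩)
  · exact Subgroup.mem_center_iff.2 fun l =>
      Subtype.ext (Subgroup.mem_center_iff.1 (hcenter hx) l)

theorem isQuasisimple_of_map [IsSimpleGroup (L.map π)] (hperfect : ⁅L, L⁆ = L)
    (hcenter : (Subgroup.center L).map L.subtype = π.ker) : IsQuasisimple L := by
  refine ⟨Subgroup.map_injective L.subtype_injective ?_, ?_⟩
  · rw [commutator_def, Subgroup.map_commutator, ← MonoidHom.range_eq_map,
      Subgroup.range_subtype, hperfect]
  · have hker : Subgroup.center L = (π.subgroupMap L).ker := by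
      rw [← Subgroup.comap_map_eq_self_of_injective L.subtype_injective (Subgroup.center L),
        hcenter]
      ext x
      simp only [Subgroup.mem_comap, MonoidHom.mem_ker, Subtype.ext_iff]
      rfl
    exact ((QuotientGroup.quotientMulEquivOfEq hker).trans
      (QuotientGroup.quotientKerEquivOfSurjective _ (π.subgroupMap_surjective L))).isSimpleGroup

theorem isNearlySimple_of_map [L.Normal] [IsSimpleGroup (L.map π)] (hperfect : ⁅L, L⁆ = L)
    (hL : Subgroup.centralizer (L.map π : Set G) = ⊥) (hcenter : π.ker ≤ Subgroup.center H)
    (hker : π.ker ≤ L) [IsCyclic π.ker] {h : H} (hsup : L ⊔ Subgroup.zpowers h = ⊤) :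
    IsNearlySimple H h := by
  have hcomm : commutator H = L :=
    (Subgroup.Normal.commutator_le_of_self_sup_commutative_eq_top hsup inferInstance).antisymm
      (hperfect ▸ Subgroup.commutator_mono le_top le_top)
  have hZ := map_subtype_center_eq_ker hL hcenter hker
  have hC := center_eq_ker hL hcenter
  constructor
  · rw [hcomm]
    exact isQuasisimple_of_map hperfect hZ
  · rw [hcomm, hZ, hC]
  · rw [hC]
    infer_instance
  · rw [hcomm, hsup]

end NearlySimple

section Cover

variable {Γ G K : Type*} [Group Γ] [Group G] [Field K] {π : Γ →* G}

theorem isCyclic_ker_comp_subtype {f : π.ker →* Kˣ} (hf : Function.Injective f)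
    (H : Subgroup Γ) [Finite H] : IsCyclic (π.comp H.subtype).ker := by
  let ι : (π.comp H.subtype).ker →* π.ker :=
    (H.subtype.comp (π.comp H.subtype).ker.subtype).codRestrict π.ker fun x => x.2
  have hι : Function.Injective ι := fun x y hxy =>
    Subtype.ext (Subtype.ext (congrArg (fun z : π.ker => (z : Γ)) hxy))
  exact isCyclic_of_injective_ringHom ((Units.coeHom K).comp (f.comp ι))
    (Units.val_injective.comp (hf.comp hι))

theorem exists_units_pow_eq [IsAlgClosed K] {m : ℕ} (hm : m ≠ 0) (c : Kˣ) :
    ∃ d : Kˣ, d ^ m = c := by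
  obtain ⟨d, hd⟩ := IsAlgClosed.exists_pow_nat_eq (c : K) (Nat.pos_of_ne_zero hm)
  have hd0 : d ≠ 0 := by
    rintro rfl
    exact c.ne_zero (by rw [← hd, zero_pow hm])
  exact ⟨Units.mk0 d hd0, Units.ext hd⟩

variable [Finite G]

theorem isNearlySimple_sup_zpowers (hcenter : π.ker ≤ Subgroup.center Γ) {f : π.ker →* Kˣ}
    (hf : Function.Injective f) {L : Subgroup Γ} [L.Normal] [Finite L] [(L.map π).Normal]
    [IsSimpleGroup (L.map π)] (hperfect : ⁅L, L⁆ = L)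
    (hL : Subgroup.centralizer (L.map π : Set G) = ⊥) {h : Γ}
    (hh : h ^ orderOf (π h : G ⧸ L.map π) ∈ L) {H : Subgroup Γ}
    (hH : L ⊔ Subgroup.zpowers h = H) (hhH : h ∈ H) :
    Finite H ∧ IsNearlySimple H ⟨h, hhH⟩ ∧ Subgroup.center H = (π.comp H.subtype).ker := by
  have hLH : L ≤ H := hH ▸ le_sup_left
  have hfin : Finite H := hH ▸ finite_sup_zpowers (orderOf_pos _).ne' hh
  have hmap : (L.subgroupOf H).map (π.comp H.subtype) = L.map π := by
    rw [← Subgroup.map_map, Subgroup.map_subgroupOf_eq_of_le hLH]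
  have hcenterH : (π.comp H.subtype).ker ≤ Subgroup.center H := fun x hx =>
    Subgroup.mem_center_iff.2 fun y => Subtype.ext (Subgroup.mem_center_iff.1 (hcenter hx) y)
  have hsimple : IsSimpleGroup ((L.subgroupOf H).map (π.comp H.subtype)) := by rwa [hmap]
  have hcyclic := isCyclic_ker_comp_subtype hf H
  have hsup : L.subgroupOf H ⊔ Subgroup.zpowers ⟨h, hhH⟩ = ⊤ := by
    apply Subgroup.map_injective H.subtype_injective
    rw [Subgroup.map_sup, Subgroup.map_subgroupOf_eq_of_le hLH, MonoidHom.map_zpowers,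
      ← MonoidHom.range_eq_map, Subgroup.range_subtype]
    exact hH
  refine ⟨hfin, isNearlySimple_of_map (L := L.subgroupOf H) ?_ (hmap ▸ hL) hcenterH ?_ hsup,
    center_eq_ker (hmap ▸ hL) hcenterH⟩
  · rw [commutator_subgroupOf hLH, hperfect]
  · exact fun x hx => mem_of_mem_sup_zpowers hh (hH ▸ x.2) hx

/-- The cover is generated by the commutator subgroup of the preimage of `N`, which is finite by
Schur's theorem, and a lift of `g` corrected by a root of a scalar. -/
theorem exists_isNearlySimple_cover [IsAlgClosed K] (hπ : Function.Surjective π)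
    (hcenter : π.ker ≤ Subgroup.center Γ) (e : π.ker ≃* Kˣ) {N : Subgroup G} [N.Normal]
    [IsSimpleGroup N] (hN : ⁅N, N⁆ = N) (hcent : Subgroup.centralizer (N : Set G) = ⊥) {g : G}
    (hsup : N ⊔ Subgroup.zpowers g = ⊤) :
    ∃ (H : Subgroup Γ) (h : H), Finite H ∧ IsNearlySimple H h ∧
      Subgroup.center H = (π.comp H.subtype).ker ∧ π h = g ∧ H.map π = ⊤ := by
  obtain ⟨L, hLdef⟩ : ∃ L, L = ⁅N.comap π, N.comap π⁆ := ⟨_, rfl⟩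
  have hnormal : L.Normal := hLdef ▸ inferInstance
  have hmap : L.map π = N := by
    rw [hLdef, Subgroup.map_commutator, Subgroup.map_comap_eq_self_of_surjective hπ, hN]
  have hfin : Finite L := by
    have : (Subgroup.center Γ).FiniteIndex := Subgroup.finiteIndex_of_le hcenter
    have := finite_commutatorSet (Γ := Γ)
    have hle : L ≤ commutator Γ := hLdef ▸ Subgroup.commutator_mono le_top le_top
    exact Finite.of_injective _ (Subgroup.inclusion_injective hle)
  have hperfect : ⁅L, L⁆ = L := by
    rw [hLdef]
    refine commutator_commutator_eq ?_
    rw [← hLdef, ← hmap, Subgroup.comap_map_eq]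
    exact sup_le_sup_left hcenter L
  have hdiv : ∀ z ∈ π.ker, ∃ w ∈ π.ker, w ^ orderOf (g : G ⧸ N) = z := fun z hz => by
    obtain ⟨d, hd⟩ := exists_units_pow_eq (orderOf_pos (g : G ⧸ N)).ne' (e ⟨z, hz⟩)
    refine ⟨e.symm d, (e.symm d).2, ?_⟩
    rw [← Subgroup.coe_pow, ← map_pow, hd, e.symm_apply_apply]
  obtain ⟨h, rfl, hh⟩ := exists_map_eq_and_pow_mem hπ hcenter hdiv
    (hmap.ge (pow_orderOf_mk_mem N g))
  subst hmap
  obtain ⟨hfinH, hnearly, hcenterH⟩ := isNearlySimple_sup_zpowers hcenter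
    (f := e.toMonoidHom) e.injective hperfect hcent hh rfl
    (Subgroup.mem_sup_right (Subgroup.mem_zpowers h))
  refine ⟨_, _, hfinH, hnearly, hcenterH, rfl, ?_⟩
  rw [Subgroup.map_sup, MonoidHom.map_zpowers, hsup]

end Cover

section LiftGroup

variable {K G V : Type*} [Field K] [Group G] [AddCommGroup V] [Module K V]
  {T : G → Module.End K V}

namespace IsProjRep

/-- The central extension of `G` by `Kˣ` on which the projective representation `T` becomes
linear: pairs `(x, u)` where `u` is a scalar multiple of `T x`. -/
def liftGroup (h : IsProjRep T) : Subgroup (G × (Module.End K V)ˣ) where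
  carrier := {p | (p.2 : Module.End K V) ∝ T p.1}
  one_mem' := h.map_one.symm
  mul_mem' := fun {a b} ha hb => (Proportional.mul ha hb).trans (h.map_mul a.1 b.1).symm
  inv_mem' := fun {a} ha => by
    have hinv := (Proportional.refl (↑a.2⁻¹ : Module.End K V)).mul
      ((Proportional.mul ha (.refl (T a.1⁻¹))).trans (h.mul_map_inv a.1))
    rw [Units.inv_mul_cancel_left, mul_one] at hinv
    exact hinv.symm

/-- The projection of the lift group onto `G`. -/
def liftGroupFst (h : IsProjRep T) : h.liftGroup →* G :=
  (MonoidHom.fst _ _).comp h.liftGroup.subtype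

/-- The linear representation of the lift group afforded by the second projection. -/
def liftRep (h : IsProjRep T) : Representation K h.liftGroup V :=
  (Units.coeHom _).comp ((MonoidHom.snd _ _).comp h.liftGroup.subtype)

theorem liftRep_proportional (h : IsProjRep T) (x : h.liftGroup) :
    h.liftRep x ∝ T (h.liftGroupFst x) := x.2

theorem liftGroupFst_surjective (h : IsProjRep T) : Function.Surjective h.liftGroupFst :=
  fun x => ⟨⟨(x, (h.isUnit x).unit), .refl (T x)⟩, rfl⟩

theorem liftGroup_ext (h : IsProjRep T) {x y : h.liftGroup}
    (hfst : h.liftGroupFst x = h.liftGroupFst y) (hrep : h.liftRep x = h.liftRep y) : x = y :=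
  Subtype.ext (Prod.ext hfst (Units.ext hrep))

theorem eq_of_proportional (h : IsProjRep T) (hker : h.scalarKernel = ⊥) {x y : G}
    (hxy : T x ∝ T y) : x = y := by
  rw [← mul_inv_eq_one, ← Subgroup.mem_bot, ← hker, h.mem_scalarKernel]
  exact (h.map_mul _ _).trans ((hxy.mul (.refl _)).trans (h.mul_map_inv y))

theorem liftRep_injective (h : IsProjRep T) (hker : h.scalarKernel = ⊥) :
    Function.Injective h.liftRep := fun x y hxy =>
  h.liftGroup_ext (h.eq_of_proportional hker ((h.liftRep_proportional x).symm.trans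
    (hxy ▸ h.liftRep_proportional y))) hxy

theorem liftRep_proportional_one (h : IsProjRep T) {x : h.liftGroup}
    (hx : x ∈ h.liftGroupFst.ker) : h.liftRep x ∝ 1 := by
  have hprop := h.liftRep_proportional x
  rw [MonoidHom.mem_ker.1 hx] at hprop
  exact hprop.trans h.map_one

theorem ker_liftGroupFst_le_center (h : IsProjRep T) :
    h.liftGroupFst.ker ≤ Subgroup.center h.liftGroup := by
  intro x hx
  obtain ⟨c, -, hc⟩ := h.liftRep_proportional_one hx
  refine Subgroup.mem_center_iff.2 fun y => h.liftGroup_ext ?_ ?_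
  · rw [_root_.map_mul, _root_.map_mul, MonoidHom.mem_ker.1 hx, mul_one, one_mul]
  · rw [_root_.map_mul, _root_.map_mul, hc, mul_smul_comm, smul_mul_assoc, one_mul, mul_one]

/-- The scalars form the kernel of the projection of the lift group onto `G`. -/
noncomputable def scalarLift (h : IsProjRep T) : Kˣ →* h.liftGroupFst.ker where
  toFun c := ⟨⟨(1, Units.map (algebraMap K (Module.End K V)).toMonoidHom c),
    Proportional.trans ⟨c, c.ne_zero, Algebra.algebraMap_eq_smul_one _⟩ h.map_one.symm⟩, rfl⟩
  map_one' := by simp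
  map_mul' c d := by simp

theorem liftRep_scalarLift (h : IsProjRep T) (c : Kˣ) :
    h.liftRep (h.scalarLift c) = (c : K) • 1 :=
  Algebra.algebraMap_eq_smul_one (A := Module.End K V) (c : K)

theorem scalarLift_bijective [Nontrivial V] (h : IsProjRep T) :
    Function.Bijective h.scalarLift := by
  refine ⟨fun c d hcd => ?_, fun x => ?_⟩
  · have hsmul := h.liftRep_scalarLift c
    rw [hcd, liftRep_scalarLift] at hsmul
    exact Units.ext (smul_left_injective K (one_ne_zero (α := Module.End K V)) hsmul).symm
  · obtain ⟨c, hc, hxc⟩ := h.liftRep_proportional_one x.2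
    refine ⟨Units.mk0 c hc, Subtype.ext (h.liftGroup_ext ?_ ?_)⟩
    · exact (MonoidHom.mem_ker.1 x.2).symm
    · rw [liftRep_scalarLift, hxc, Units.val_mk0]

end IsProjRep

end LiftGroup

section FiniteDimensionalReps

open CategoryTheory

theorem isProjRep_of_representation {K G V : Type*} [Field K] [Group G] [AddCommGroup V]
    [Module K V] (ρ : Representation K G V) : IsProjRep fun x => ρ x where
  isUnit x := (Group.isUnit x).map ρ
  map_mul x y := map_mul ρ x y ▸ .refl _

theorem isIrreducible_of_isIrreducibleFamily {K G V : Type*} [Field K] [Monoid G] [AddCommGroup V]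
    [Module K V] {ρ : Representation K G V} (hI : IsIrreducibleFamily fun x => ρ x) :
    ρ.IsIrreducible := by
  have := hI.nontrivial
  have : Nontrivial (Subrepresentation ρ) :=
    ⟨⊥, ⊤, fun h => bot_ne_top (congrArg Subrepresentation.toSubmodule h)⟩
  exact ⟨fun W => (hI.eq_bot_or_eq_top W.toSubmodule fun x _ hw => W.apply_mem_toSubmodule x hw).imp
    (fun h => Subrepresentation.toSubmodule_injective h)
    fun h => Subrepresentation.toSubmodule_injective h⟩

theorem simple_of_isIrreducibleFamily {K G V : Type u} [Field K] [IsAlgClosed K] [Group G]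
    [Finite G] [NeZero (Nat.card G : K)] [AddCommGroup V] [Module K V] [FiniteDimensional K V]
    {ρ : Representation K G V} (hI : IsIrreducibleFamily fun x => ρ x) : Simple (FDRep.of ρ) := by
  have := isIrreducible_of_isIrreducibleFamily hI
  rw [FDRep.simple_iff_end_is_rank_one, ← (FDRep.forget₂HomLinearEquiv _ _).finrank_eq,
    (Rep.homLinearEquiv _ _).finrank_eq]
  exact Representation.IsIrreducible.finrank_intertwiningMap_self ρ

theorem isIrreducibleFamily_of_simple {K : Type u} {G : Type v} [Field K] [Monoid G]
    (V : FDRep K G) [Simple V] : IsIrreducibleFamily fun x => V.ρ x where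
  nontrivial := by
    by_contra hsub
    have : Subsingleton V := not_nontrivial_iff_subsingleton.1 hsub
    exact id_nonzero V (ConcreteCategory.hom_ext _ _ fun v => this.elim _ _)
  eq_bot_or_eq_top W hW := by
    let σ : Subrepresentation V.ρ := ⟨W, hW⟩
    let incl : FDRep.of σ.toRepresentation ⟶ V :=
      FDRep.forget₂HomLinearEquiv (FDRep.of σ.toRepresentation) V
        (Rep.ofHom ⟨W.subtype, fun _ => rfl⟩)
    have : Mono incl := ConcreteCategory.mono_of_injective incl Subtype.val_injective
    refine or_iff_not_imp_left.2 fun hne => W.eq_top_iff'.2 fun v => ?_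
    have hincl : incl ≠ 0 := fun h0 => hne <| W.eq_bot_iff.2 fun w hw =>
      congrArg (fun f : FDRep.of σ.toRepresentation ⟶ V => f (⟨w, hw⟩ : W)) h0
    have : IsIso incl := isIso_of_mono_of_nonzero hincl
    obtain ⟨w, rfl⟩ := (ConcreteCategory.bijective_of_isIso incl).2 v
    exact Subtype.prop (p := (· ∈ W)) w

end FiniteDimensionalReps

theorem IsSimpleFactor.isSimpleGroup_self {G : Type*} [Group G] {N : Subgroup G}
    (hN : IsSimpleFactor N N) : IsSimpleGroup N :=
  Subgroup.isSimpleGroup_iff.2 ⟨hN.ne_bot, fun _ hRN hR =>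
    hN.eq_bot_or_eq hRN ((Subgroup.normal_subgroupOf_iff_le_normalizer hRN).1 hR)⟩

section CenterQuotient

variable {H G : Type*} [Group H] [Group G] {f : H →* G}

theorem orderOf_mk_of_center_eq_ker (hf : Subgroup.center H = f.ker) (h : H) :
    orderOf (h : H ⧸ Subgroup.center H) = orderOf (f h) :=
  orderOf_eq_orderOf_iff.2 fun n => by
    rw [← QuotientGroup.mk_pow, QuotientGroup.eq_one_iff, hf, MonoidHom.mem_ker, map_pow]

theorem index_center_of_center_eq_ker (hf : Subgroup.center H = f.ker)
    (hsurj : Function.Surjective f) : (Subgroup.center H).index = Nat.card G := by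
  rw [hf, Subgroup.index_ker, MonoidHom.range_eq_top.2 hsurj, Subgroup.card_top]

end CenterQuotient

/-- Wilde's divisibility, read modulo the center, for all triples `(H, h, χ)` satisfying `(*)`. -/
def NearlySimpleWilde : Prop :=
  ∀ (H : Type) [Group H] [Finite H] (h : H) (V : FDRep ℂ H),
    SatisfiesStar H h V → V.character h ≠ 0 →
    orderOf (QuotientGroup.mk h : H ⧸ Subgroup.center H) * finrank ℂ V ∣ (Subgroup.center H).index

section Wilde

variable {G V : Type} [Group G] [Finite G] [AddCommGroup V] [Module ℂ V] [FiniteDimensional ℂ V]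
  {T : G → Module.End ℂ V} {g : G}

namespace NearlySimpleWilde

theorem dvd_of_isNearlySimple {H : Type} [Group H] [Finite H] {h : H} (hyp : NearlySimpleWilde)
    (hH : IsNearlySimple H h) {ρ : Representation ℂ H V} (hinj : Function.Injective ρ)
    (hI : IsIrreducibleFamily fun x => ρ x) (hh : LinearMap.trace ℂ V (ρ h) ≠ 0) :
    orderOf (h : H ⧸ Subgroup.center H) * finrank ℂ V ∣ (Subgroup.center H).index :=
  have : NeZero (Nat.card H : ℂ) := ⟨Nat.cast_ne_zero.2 Nat.card_pos.ne'⟩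
  hyp H h (FDRep.of ρ) ⟨simple_of_isIrreducibleFamily hI, hinj, hH.isQuasisimple, hH.map_center,
    hH.isCyclic_center, hH.sup_zpowers⟩ hh

theorem dvd_of_isSimpleGroup (hyp : NearlySimpleWilde) (h : IsProjRep T) (hker : h.scalarKernel = ⊥)
    (hI : IsIrreducibleFamily T) (hg : LinearMap.trace ℂ V (T g) ≠ 0) {N : Subgroup G} [N.Normal]
    [IsSimpleGroup N] (hN : ⁅N, N⁆ = N) (hcent : Subgroup.centralizer (N : Set G) = ⊥)
    (hsup : N ⊔ Subgroup.zpowers g = ⊤) : orderOf g * finrank ℂ V ∣ Nat.card G := by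
  have := hI.nontrivial
  obtain ⟨H, x, hfin, hnearly, hcenter, hx, hmap⟩ := exists_isNearlySimple_cover
    h.liftGroupFst_surjective h.ker_liftGroupFst_le_center
    (MulEquiv.ofBijective _ h.scalarLift_bijective).symm hN hcent hsup
  have hprop (y : H) : h.liftRep y ∝ T (h.liftGroupFst y) := h.liftRep_proportional y
  have hsurj : Function.Surjective (h.liftGroupFst.comp H.subtype) := by
    rw [← MonoidHom.range_eq_top, MonoidHom.range_comp, Subgroup.range_subtype, hmap]
  have hirr : IsIrreducibleFamily fun y => h.liftRep.comp H.subtype y :=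
    hI.of_forall_exists_proportional fun z => by
      obtain ⟨y, rfl⟩ := hsurj z
      exact ⟨y, (hprop y).symm⟩
  have hdvd := hyp.dvd_of_isNearlySimple hnearly
    ((h.liftRep_injective hker).comp H.subtype_injective) hirr
    ((hx ▸ hprop x).symm.trace_ne_zero hg)
  rwa [orderOf_mk_of_center_eq_ker hcenter, index_center_of_center_eq_ker hcenter hsurj,
    show (h.liftGroupFst.comp H.subtype) x = g from hx] at hdvd

theorem dvd_of_scalarKernel_eq_bot (hyp : NearlySimpleWilde)
    (hn : WildeBelow.{0, 0} ℂ (Nat.card G + finrank ℂ V)) (h : IsProjRep T)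
    (hker : h.scalarKernel = ⊥) (hI : IsIrreducibleFamily T)
    (hg : LinearMap.trace ℂ V (T g) ≠ 0) : orderOf g * finrank ℂ V ∣ Nat.card G := by
  by_contra hndvd
  have hnormal (M : Subgroup G) (_ : M.Normal) (hM : M ≠ ⊥) :
      M ⊔ Subgroup.zpowers g = ⊤ ∧ IsIrreducibleFamily fun x : M => T x :=
    (hn.dvd_or_isIrreducibleFamily h hI hg hM).resolve_left hndvd
  have hcomm (M : Subgroup G) (hM : M.Normal) (hM0 : M ≠ ⊥) : ¬ IsMulCommutative M := fun _ =>
    hndvd (orderOf_mul_finrank_dvd_card_of_isMulCommutative h hker (hnormal M hM hM0).2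
      (hnormal M hM hM0).1)
  have : Nontrivial G := by
    by_contra hG
    rw [not_nontrivial_iff_subsingleton] at hG
    have : IsMulCommutative (⊤ : Subgroup G) := ⟨⟨fun _ _ => Subsingleton.elim _ _⟩⟩
    exact hndvd (orderOf_mul_finrank_dvd_card_of_isMulCommutative h hker (N := ⊤)
      (hI.of_forall_exists_proportional fun x => ⟨⟨x, trivial⟩, .refl _⟩) (top_sup_eq _))
  obtain ⟨N, S, hS⟩ := exists_isSimpleFactor (fun M hM hM0 => (hnormal M hM hM0).1) hcomm
  obtain ⟨hsup, hIN⟩ := hnormal N hS.normal (ne_bot_of_le_ne_bot hS.ne_bot hS.le)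
  by_cases hSnormal : Subgroup.normalizer (S : Set G) = ⊤
  · have := Subgroup.normalizer_eq_top_iff.1 hSnormal
    obtain rfl : S = N := hS.le.antisymm (hS.le_of_normal le_rfl)
    have := hS.isSimpleGroup_self
    exact hndvd (hyp.dvd_of_isSimpleGroup h hker hI hg hS.commutator_eq hS.centralizer_eq_bot hsup)
  · exact hndvd (hn.dvd_of_normalizer_ne_top h hker hg hS hIN hsup hSnormal)

theorem wildeBelow (hyp : NearlySimpleWilde) (n : ℕ) : WildeBelow.{0, 0} ℂ n := by
  induction n with
  | zero => exact fun _ _ _ _ _ _ _ _ _ _ hlt => absurd hlt (Nat.not_lt_zero _)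
  | succ n ih =>
    intro G V _ _ _ _ _ T h hI hlt g hg
    have hn : WildeBelow.{0, 0} ℂ (Nat.card G + finrank ℂ V) := ih.mono (Nat.le_of_lt_succ hlt)
    by_cases hker : h.scalarKernel = ⊥
    · exact hyp.dvd_of_scalarKernel_eq_bot hn h hker hI hg
    · exact hn.dvd_of_scalarKernel_ne_bot h hI hg hker

end NearlySimpleWilde

theorem wilde_of_nearly_simple_general (hyp : NearlySimpleWilde) (h : IsProjRep T)
    (hI : IsIrreducibleFamily T) (hg : LinearMap.trace ℂ V (T g) ≠ 0) :
    orderOf g * finrank ℂ V ∣ Nat.card G :=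
  hyp.wildeBelow _ G V T h hI (Nat.lt_succ_self _) g hg

end Wilde

/-- **Theorem B.** Suppose that for every triple `(H, h, χ)` satisfying
condition `(*)` with `χ(h) ≠ 0`, the order of `hZ(H)` in `H/Z(H)` times `χ(1)` divides
`|H : Z(H)|`. Then Wilde's conjecture holds: for every finite group `G`, every irreducible
complex character `χ` of `G` and every `g ∈ G` with `χ(g) ≠ 0`, the order of `g` times
`χ(1)` divides `|G|`. -/
theorem wilde_of_nearly_simple
    (hyp : ∀ (H : Type) [Group H] [Finite H] (h : H) (V : FDRep ℂ H),
      SatisfiesStar H h V → V.character h ≠ 0 →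
      orderOf (QuotientGroup.mk h : H ⧸ Subgroup.center H) * Module.finrank ℂ V ∣
        (Subgroup.center H).index)
    (G : Type) [Group G] [Finite G] (V : FDRep ℂ G) (hV : CategoryTheory.Simple V)
    (g : G) (hg : V.character g ≠ 0) :
    orderOf g * Module.finrank ℂ V ∣ Nat.card G :=
  wilde_of_nearly_simple_general hyp (isProjRep_of_representation V.ρ)
    (isIrreducibleFamily_of_simple V) hg
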